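/- arXiv:2007.09030 — 2 statements merged into one kernel-verified Lean document; each statement's English description precedes it below -/
import Mathlib

section
/- Let X be a nonempty metric space whose conformal dimension Q = Confdim X is finite and positive and is attained, i.e., there exist an Ahlfors Q-regular metric space W and a quasisymmetric homeomorphism from X onto W. Then no nonempty porous subset Y ⊆ X (with the induced metric) admits a quasisymmetric homeomorphism onto X. -/
open scoped NNReal

universe u

/-- A subset `Y` of a metric space `X` is porous. -/
def Porous {X : Type*} [MetricSpace X] (Y : Set X) : Prop :=
  ∃ c : ℝ, 0 < c ∧ ∀ y ∈ Y, ∀ r : ℝ, 0 < r →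
    ENNReal.ofReal r ≤ EMetric.diam (Set.univ : Set X) →
    ∃ x : X, Metric.ball x (c * r) ⊆ Metric.ball y r \ Y

/-- `f` is `η`-quasisymmetric, the control `η` being a self-homeomorphism of `[0,∞)`. -/
def IsQuasisymmetricWith {X X' : Type*} [MetricSpace X] [MetricSpace X']
    (η : ℝ≥0 ≃ₜ ℝ≥0) (f : X → X') : Prop :=
  ∀ x y z : X, ∀ t : ℝ≥0, nndist x y ≤ t * nndist x z →
    nndist (f x) (f y) ≤ η t * nndist (f x) (f z)

/-- `f` is quasisymmetric if it is `η`-quasisymmetric for some homeomorphism `η` of `[0,∞)`. -/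
def IsQuasisymmetric {X X' : Type*} [MetricSpace X] [MetricSpace X'] (f : X → X') : Prop :=
  ∃ η : ℝ≥0 ≃ₜ ℝ≥0, IsQuasisymmetricWith η f

/-- A metric space `W` is Ahlfors `Q`-regular: it is complete and carries a Borel measure `μ`
with `C⁻¹ r^Q ≤ μ(B(w,r)) ≤ C r^Q` for all `w` and `0 < r ≤ diam W`. -/
def AhlforsRegular (W : Type u) [MetricSpace W] (Q : ℝ) : Prop :=
  CompleteSpace W ∧
    ∃ (_ : MeasurableSpace W) (_ : BorelSpace W) (μ : MeasureTheory.Measure W) (C : ℝ),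
      1 ≤ C ∧ ∀ w : W, ∀ r : ℝ, 0 < r →
        ENNReal.ofReal r ≤ EMetric.diam (Set.univ : Set W) →
        ENNReal.ofReal (C⁻¹ * r ^ Q) ≤ μ (Metric.ball w r) ∧
          μ (Metric.ball w r) ≤ ENNReal.ofReal (C * r ^ Q)

/-- The set of exponents `Q ≥ 0` such that `Z` is quasisymmetric to some Ahlfors
`Q`-regular metric space. -/
def confdimSet (Z : Type u) [MetricSpace Z] : Set ℝ :=
  {Q : ℝ | 0 ≤ Q ∧ ∃ (W : Type u) (_ : MetricSpace W) (f : Z ≃ₜ W),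
    AhlforsRegular W Q ∧ IsQuasisymmetric (f : Z → W)}

/-- The (Ahlfors regular) conformal dimension of `Z`. -/
noncomputable def confdim (Z : Type u) [MetricSpace Z] : ℝ :=
  sInf (confdimSet Z)

/-!
Transport the problem to the attaining `Q`-regular space `W`: a porous subset of `X` quasisymmetric
to `X` becomes a porous subset `Y ⊆ W` quasisymmetric to `W`. In `W` the holes of `Y` cost volume at
every scale, so for a small ratio `ρ` a `ρ R`-separated subset of `Y` in a ball of radius `R` has at
most `N` points, where `N ρ ^ Q < 1`. Put `s = log N / log ρ⁻¹ < Q`.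

Splitting mass down a tree of nets of `Y`, as Vol'berg and Konyagin do, gives a measure `μ` on `Y`
with `μ (B(x, λ r)) ≤ C λ ^ s μ (B(x, r))`. Since `Y` is uniformly perfect, `μ` is also reverse
doubling. Then `μ (B(x, d(x, y))) ^ (1 / s)` is comparable to a metric on `Y` that is
quasisymmetric to the original one and `s`-regular for `μ`: since `μ (B(x, r)) ^ (1 / s)` grows at
most linearly in `r`, such a metric is the supremum over the balls `B(z, R)` of the distance to `z`
truncated at `R` and rescaled to height `μ (B(z, R)) ^ (1 / s)`. Thus `X`, being quasisymmetric to
`Y`, has conformal dimension at most `s < Q`.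
-/

section

open scoped NNReal ENNReal Topology
open Bornology Filter MeasureTheory Metric Set

/-! ### Quasisymmetric maps -/

namespace ConformalDimension

theorem strictMono_homeomorph (η : ℝ≥0 ≃ₜ ℝ≥0) : StrictMono η := by
  refine (η.continuous.strictMono_of_inj η.injective).resolve_right fun hanti ↦ ?_
  obtain ⟨t, ht⟩ := η.surjective (η 0 + 1)
  have hle : η t ≤ η 0 := hanti.antitone zero_le
  exact (lt_add_of_pos_right (η 0) one_pos).not_ge (ht ▸ hle)

theorem homeomorph_zero (η : ℝ≥0 ≃ₜ ℝ≥0) : η 0 = 0 := by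
  obtain ⟨t, ht⟩ := η.surjective 0
  exact le_antisymm (((strictMono_homeomorph η).monotone zero_le).trans_eq ht) zero_le

theorem homeomorph_pos (η : ℝ≥0 ≃ₜ ℝ≥0) {t : ℝ≥0} (ht : 0 < t) : 0 < η t :=
  homeomorph_zero η ▸ strictMono_homeomorph η ht

theorem exists_pos_homeomorph_eq (η : ℝ≥0 ≃ₜ ℝ≥0) {ε : ℝ} (hε : 0 < ε) :
    ∃ t : ℝ≥0, 0 < t ∧ (η t : ℝ) = ε := by
  lift ε to ℝ≥0 using hε.le
  exact ⟨η.symm ε, homeomorph_pos _ (mod_cast hε), by simp⟩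

theorem exists_homeomorph_inv_symm_inv (η : ℝ≥0 ≃ₜ ℝ≥0) :
    ∃ η' : ℝ≥0 ≃ₜ ℝ≥0, ∀ t, η' t = (η.symm t⁻¹)⁻¹ := by
  have hmono : StrictMono fun t ↦ (η.symm t⁻¹)⁻¹ := by
    intro a b hab
    have hb : 0 < (η.symm b⁻¹) := homeomorph_pos _ (inv_pos.2 (zero_le.trans_lt hab))
    rcases eq_or_ne a 0 with rfl | ha
    · simpa [homeomorph_zero] using hb
    · have : η.symm b⁻¹ < η.symm a⁻¹ := strictMono_homeomorph η.symm (by gcongr)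
      dsimp only
      gcongr
  exact ⟨(hmono.orderIsoOfSurjective _ fun t ↦ ⟨(η t⁻¹)⁻¹, by simp⟩).toHomeomorph, fun _ ↦ rfl⟩

theorem exists_homeomorph_rpow_add {C α : ℝ} (hC : 0 < C) (hα : 0 < α) :
    ∃ η : ℝ≥0 ≃ₜ ℝ≥0, ∀ t : ℝ≥0, (η t : ℝ) = C * ((t : ℝ) ^ α + t) := by
  lift C to ℝ≥0 using hC.le
  have hC : 0 < C := mod_cast hC
  have hmono : StrictMono fun t : ℝ≥0 ↦ C * (t ^ α + t) := by
    intro a b hab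
    have : a ^ α < b ^ α := NNReal.rpow_lt_rpow hab hα
    dsimp only
    gcongr
  have hsurj : Function.Surjective fun t : ℝ≥0 ↦ C * (t ^ α + t) := by
    intro y
    have := NNReal.continuous_rpow_const hα.le
    refine mem_range_of_exists_le_of_exists_ge (by fun_prop) ⟨0, by simp [hα.ne']⟩ ⟨C⁻¹ * y, ?_⟩
    rw [mul_add, mul_inv_cancel_left₀ hC.ne']
    exact le_add_of_nonneg_left zero_le
  exact ⟨(hmono.orderIsoOfSurjective _ hsurj).toHomeomorph, fun t ↦ by
    simp [OrderIso.toHomeomorph]⟩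

end ConformalDimension

open ConformalDimension

namespace IsQuasisymmetricWith

variable {X X' : Type*} [MetricSpace X] [MetricSpace X'] {η : ℝ≥0 ≃ₜ ℝ≥0} {f : X → X'}

theorem dist_le (hf : IsQuasisymmetricWith η f) {x y z : X} {t : ℝ≥0}
    (h : dist x y ≤ t * dist x z) : dist (f x) (f y) ≤ η t * dist (f x) (f z) :=
  mod_cast hf x y z t (mod_cast h)

theorem of_dist_le (h : ∀ (x y z : X) (t : ℝ≥0), dist x y ≤ t * dist x z →
    dist (f x) (f y) ≤ η t * dist (f x) (f z)) : IsQuasisymmetricWith η f :=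
  fun x y z t hd ↦ mod_cast h x y z t (mod_cast hd)

theorem isBounded_image (hf : IsQuasisymmetricWith η f) {s : Set X} (hs : IsBounded s) :
    IsBounded (f '' s) := by
  rcases s.subsingleton_or_nontrivial with hsub | ⟨p, hp, q, hq, hpq⟩
  · exact (hsub.image f).finite.isBounded
  obtain ⟨D, hD⟩ := isBounded_iff.1 hs
  have hpq : 0 < dist p q := dist_pos.2 hpq
  have hD0 : 0 ≤ D := dist_nonneg.trans (hD hp hq)
  refine (isBounded_iff_subset_closedBall (f p)).2
    ⟨η ⟨D / dist p q, by positivity⟩ * dist (f p) (f q), ?_⟩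
  rintro _ ⟨x, hx, rfl⟩
  rw [mem_closedBall, dist_comm]
  apply hf.dist_le
  exact (hD hp hx).trans_eq (div_mul_cancel₀ D hpq.ne').symm

theorem uniformContinuousOn (hf : IsQuasisymmetricWith η f) {s : Set X} (hs : IsBounded s) :
    UniformContinuousOn f s := by
  rw [Metric.uniformContinuousOn_iff]
  intro ε hε
  rcases s.subsingleton_or_nontrivial with hsub | ⟨p, hp, q, hq, hpq⟩
  · exact ⟨1, one_pos, fun x hx y hy _ ↦ by simpa [hsub hx hy] using hε⟩
  obtain ⟨D, hD⟩ := isBounded_iff.1 (hf.isBounded_image hs)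
  have hpq : 0 < dist p q := dist_pos.2 hpq
  have hD0 : 0 ≤ D := dist_nonneg.trans (hD (mem_image_of_mem f hp) (mem_image_of_mem f hp))
  obtain ⟨t, ht, hηt⟩ := exists_pos_homeomorph_eq η (ε := ε / (D + 1)) (by positivity)
  refine ⟨t * (dist p q / 2), by positivity, fun x hx y _ hxy ↦ ?_⟩
  obtain ⟨z, hz, hxz⟩ : ∃ z ∈ s, dist p q / 2 ≤ dist x z := by
    by_contra! hnear
    linarith [dist_triangle_left p q x, hnear p hp, hnear q hq]
  calc dist (f x) (f y) ≤ η t * dist (f x) (f z) := hf.dist_le (hxy.le.trans (by gcongr))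
    _ ≤ ε / (D + 1) * D := by
      rw [hηt]
      gcongr
      exact hD (mem_image_of_mem f hx) (mem_image_of_mem f hz)
    _ < ε / (D + 1) * (D + 1) := by gcongr; linarith
    _ = ε := by field_simp

end IsQuasisymmetricWith

namespace IsQuasisymmetric

variable {X X' X'' : Type*} [MetricSpace X] [MetricSpace X'] [MetricSpace X'']

theorem comp {g : X' → X''} {f : X → X'} (hg : IsQuasisymmetric g) (hf : IsQuasisymmetric f) :
    IsQuasisymmetric (g ∘ f) := by
  obtain ⟨η, hf⟩ := hf
  obtain ⟨η', hg⟩ := hg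
  exact ⟨η.trans η', fun x y z t h ↦ hg _ _ _ _ (hf x y z t h)⟩

theorem symm {f : X ≃ X'} (hf : IsQuasisymmetric f) : IsQuasisymmetric f.symm := by
  obtain ⟨η, hf⟩ := hf
  obtain ⟨η', hη'⟩ := exists_homeomorph_inv_symm_inv η
  suffices key : ∀ x y z : X, ∀ t : ℝ≥0, nndist (f x) (f y) ≤ t * nndist (f x) (f z) →
      nndist x y ≤ η' t * nndist x z from
    ⟨η', fun x y z t h ↦ key _ _ _ t (by simpa using h)⟩
  intro x y z t h
  rcases eq_or_ne x y with rfl | hxy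
  · simp
  have hxy' : 0 < nndist x y := by rwa [pos_iff_ne_zero, Ne, nndist_eq_zero]
  have hfxy : 0 < nndist (f x) (f y) := by
    rwa [pos_iff_ne_zero, Ne, nndist_eq_zero, f.injective.eq_iff]
  have ht : 0 < t := pos_of_mul_pos_left (hfxy.trans_le h) zero_le
  have hctl := hf x z y (nndist x z / nndist x y) (by rw [div_mul_cancel₀ _ hxy'.ne'])
  have hinv : t⁻¹ ≤ η (nndist x z / nndist x y) := by
    rw [inv_le_iff_one_le_mul₀' ht]
    refine le_of_mul_le_mul_right ?_ hfxy
    calc 1 * nndist (f x) (f y) ≤ t * nndist (f x) (f z) := by simpa using h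
      _ ≤ t * (η (nndist x z / nndist x y) * nndist (f x) (f y)) := by gcongr
      _ = _ := by ring
  have hquot : η.symm t⁻¹ ≤ nndist x z / nndist x y := by
    simpa using (strictMono_homeomorph η.symm).monotone hinv
  rw [le_div_iff₀ hxy'] at hquot
  rw [hη']
  exact (le_inv_mul_iff₀ (homeomorph_pos η.symm (inv_pos.2 ht))).2 hquot

theorem continuous {f : X → X'} (hf : IsQuasisymmetric f) : Continuous f := by
  obtain ⟨η, hf⟩ := hf
  exact continuous_iff_continuousAt.2 fun x ↦
    (hf.uniformContinuousOn isBounded_ball).continuousOn.continuousAt (ball_mem_nhds x one_pos)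

theorem map_cauchySeq {f : X → X'} (hf : IsQuasisymmetric f) {u : ℕ → X} (hu : CauchySeq u) :
    CauchySeq (f ∘ u) := by
  obtain ⟨η, hf⟩ := hf
  have hcont := uniformContinuousOn_iff_restrict.1 (hf.uniformContinuousOn hu.isBounded_range)
  have hu' : CauchySeq (rangeFactorization u) :=
    (isUniformInducing_val _).cauchy_map_iff.1 (by rwa [Filter.map_map])
  exact hcont.comp_cauchySeq hu'

theorem completeSpace [CompleteSpace X] {f : X ≃ X'} (hf : IsQuasisymmetric f) :
    CompleteSpace X' := by
  refine Metric.complete_of_cauchySeq_tendsto fun u hu ↦ ?_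
  obtain ⟨a, ha⟩ := cauchySeq_tendsto_of_complete (hf.symm.map_cauchySeq hu)
  refine ⟨f a, ?_⟩
  simpa [Function.comp_def] using (hf.continuous.tendsto a).comp ha

end IsQuasisymmetric

namespace ConformalDimension

theorem ofReal_le_of_le {T : ℝ≥0∞} {r R : ℝ} (h : r ≤ R) (hR : ENNReal.ofReal R ≤ T) :
    ENNReal.ofReal r ≤ T :=
  (ENNReal.ofReal_le_ofReal h).trans hR

theorem ofReal_dist_le_ediam_univ {Z : Type*} [PseudoMetricSpace Z] (x y : Z) :
    ENNReal.ofReal (dist x y) ≤ ediam (univ : Set Z) :=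
  edist_dist x y ▸ edist_le_ediam_of_mem (mem_univ x) (mem_univ y)

theorem exists_div_three_le_dist {Z : Type*} [PseudoMetricSpace Z] (z : Z) {r : ℝ} (hr : 0 < r)
    (hrd : ENNReal.ofReal r ≤ ediam (univ : Set Z)) : ∃ v, r / 3 ≤ dist z v := by
  by_contra! hnear
  have hdiam : ediam (univ : Set Z) ≤ ENNReal.ofReal (2 * r / 3) :=
    ediam_le fun x _ y _ ↦ by
      rw [edist_dist]
      exact ENNReal.ofReal_le_ofReal (by linarith [dist_triangle_left x y z, hnear x, hnear y])
  have := (ENNReal.ofReal_le_ofReal_iff (by positivity)).1 (hrd.trans hdiam)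
  linarith

/-- Uniform perfectness with constant `K`: below the diameter, no annulus of ratio `K` is empty. -/
def UniformlyPerfect (Z : Type*) [PseudoMetricSpace Z] (K : ℝ) : Prop :=
  ∀ z : Z, ∀ r : ℝ, 0 < r → ENNReal.ofReal r ≤ ediam (univ : Set Z) →
    ∃ u : Z, r / K ≤ dist z u ∧ dist z u < r

/-- The two-sided volume bounds in the definition of Ahlfors `Q`-regularity, with constant `C`. -/
def AhlforsBounds {W : Type*} [PseudoMetricSpace W] [MeasurableSpace W] (μ : Measure W)
    (C Q : ℝ) : Prop :=
  ∀ w : W, ∀ r : ℝ, 0 < r → ENNReal.ofReal r ≤ ediam (univ : Set W) →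
    ENNReal.ofReal (C⁻¹ * r ^ Q) ≤ μ (ball w r) ∧ μ (ball w r) ≤ ENNReal.ofReal (C * r ^ Q)

theorem AhlforsBounds.exists_uniformlyPerfect {W : Type*} [PseudoMetricSpace W] [MeasurableSpace W]
    {μ : Measure W} {C Q : ℝ} (hμ : AhlforsBounds μ C Q) (hC : 1 ≤ C) (hQ : 0 < Q) :
    ∃ K, 1 ≤ K ∧ UniformlyPerfect W K := by
  have : 0 < C := by linarith
  obtain ⟨K, hK1, hKQ⟩ : ∃ K : ℝ, 1 ≤ K ∧ K ^ Q = 2 * C ^ 2 :=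
    ⟨(2 * C ^ 2) ^ Q⁻¹, Real.one_le_rpow (by nlinarith) (by positivity),
      Real.rpow_inv_rpow (by positivity) hQ.ne'⟩
  have hK0 : 0 < K := by linarith
  refine ⟨K, hK1, fun w r hr hrd ↦ ?_⟩
  by_contra! hempty
  have hsub : ball w r ⊆ ball w (r / K) := fun u hu ↦ by
    rw [mem_ball'] at hu ⊢
    exact lt_of_not_ge fun h ↦ (hempty u h).not_gt hu
  have hvol : C⁻¹ * r ^ Q ≤ C * (r / K) ^ Q :=
    (ENNReal.ofReal_le_ofReal_iff (by positivity)).1 <|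
      (hμ w r hr hrd).1.trans <| (measure_mono hsub).trans
        (hμ w (r / K) (by positivity) (ofReal_le_of_le (div_le_self hr.le hK1) hrd)).2
  rw [Real.div_rpow hr.le hK0.le, hKQ,
    show C * (r ^ Q / (2 * C ^ 2)) = C⁻¹ * r ^ Q / 2 by field_simp] at hvol
  linarith [show 0 < C⁻¹ * r ^ Q by positivity]

section Transfer

variable {X W : Type*} [MetricSpace X] [MetricSpace W] {f : X ≃ₜ W}

theorem UniformlyPerfect.of_isQuasisymmetric (hf : IsQuasisymmetric f) {K : ℝ} (hK : 1 ≤ K)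
    (hX : UniformlyPerfect X K) : ∃ K', 1 ≤ K' ∧ UniformlyPerfect W K' := by
  obtain ⟨η, hη⟩ := hf
  lift K to ℝ≥0 using zero_le_one.trans hK
  refine ⟨3 * (η (2 * K) + 1), by linarith [(η (2 * K)).coe_nonneg], fun z r hr hrd ↦ ?_⟩
  obtain ⟨x, rfl⟩ := f.surjective z
  -- `u` almost realises the distance from `x` to the points that `f` sends outside `ball (f x) r`.
  set S : Set X := {u | r / 3 ≤ dist (f x) (f u)} with hS
  have hSclosed : IsClosed S := isClosed_le continuous_const (continuous_const.dist f.continuous)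
  obtain ⟨v, hv⟩ := exists_div_three_le_dist (f x) hr hrd
  have hSne : S.Nonempty := ⟨f.symm v, by simpa [hS] using hv⟩
  have hpos : 0 < infDist x S :=
    (hSclosed.notMem_iff_infDist_pos hSne).1 (by simp [hS, hr])
  obtain ⟨u, huS, hu⟩ := (infDist_lt_iff hSne).1 (show infDist x S < 2 * infDist x S by linarith)
  have hxu : 0 < dist x u := hpos.trans_le (infDist_le_dist_of_mem huS)
  obtain ⟨y, hy, hy'⟩ := hX x (dist x u / 2) (by positivity)
    (ofReal_le_of_le (half_le_self hxu.le) (ofReal_dist_le_ediam_univ x u))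
  have hyS : dist (f x) (f y) < r / 3 :=
    not_le.1 fun h ↦ (infDist_le_dist_of_mem (show y ∈ S from h)).not_gt (by linarith)
  refine ⟨f y, ?_, by linarith⟩
  have hctl : dist (f x) (f u) ≤ η (2 * K) * dist (f x) (f y) := by
    apply hη.dist_le
    rw [div_le_iff₀ (by linarith)] at hy
    push_cast
    linarith
  rw [div_le_iff₀ (by positivity)]
  have : r / 3 ≤ dist (f x) (f u) := huS
  nlinarith [dist_nonneg (x := f x) (y := f y)]

theorem exists_pos_le_one_homeomorph_le_one (η : ℝ≥0 ≃ₜ ℝ≥0) :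
    ∃ t : ℝ≥0, 0 < t ∧ t ≤ 1 ∧ η t ≤ 1 := by
  obtain ⟨t, ht, hηt⟩ := exists_pos_homeomorph_eq η one_pos
  exact ⟨min t 1, lt_min ht one_pos, min_le_right _ _,
    ((strictMono_homeomorph η).monotone (min_le_left _ _)).trans (mod_cast hηt.le)⟩

theorem ball_subset_image_ball {η : ℝ≥0 ≃ₜ ℝ≥0} (hf : IsQuasisymmetricWith η f) {x p : X}
    {t : ℝ≥0} (ht : 0 < t) {ρ : ℝ} (h : dist x p ≤ t * ρ) :
    ball (f x) (dist (f x) (f p) / η t) ⊆ f '' ball x ρ := by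
  intro w hw
  obtain ⟨v, rfl⟩ := f.surjective w
  refine mem_image_of_mem f (mem_ball'.2 (lt_of_not_ge fun hv ↦ ?_))
  have hle : dist (f x) (f p) ≤ η t * dist (f x) (f v) := hf.dist_le (h.trans (by gcongr))
  rw [mem_ball', lt_div_iff₀ (by exact_mod_cast homeomorph_pos η ht), mul_comm] at hw
  exact hw.not_ge hle

theorem _root_.Porous.image_of_isQuasisymmetric (hf : IsQuasisymmetric f) {K : ℝ} (hK : 1 ≤ K)
    (hW : UniformlyPerfect W K) {Y : Set X} (hY : Porous Y) : Porous (f '' Y) := by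
  obtain ⟨η, hη⟩ := hf
  obtain ⟨c, hc, hY⟩ := hY
  lift c to ℝ≥0 using hc.le
  have hc : 0 < c := mod_cast hc
  obtain ⟨l, hl, hl1, hηl⟩ := exists_pos_le_one_homeomorph_le_one η
  set t : ℝ≥0 := (1 + l⁻¹) / c with ht
  have ht0 : 0 < t := by positivity
  have hηt : 0 < η t := homeomorph_pos η ht0
  refine ⟨1 / (2 * K * η t), by positivity, ?_⟩
  rintro _ ⟨y, hyY, rfl⟩ r hr hrd
  obtain ⟨w, hrw, hwr⟩ := hW (f y) r hr hrd
  obtain ⟨u, rfl⟩ := f.surjective w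
  have hyu : 0 < dist y u := by
    rw [dist_pos, ← f.injective.ne_iff, ← dist_pos]
    exact lt_of_lt_of_le (by positivity) hrw
  set R := l * dist y u with hR
  obtain ⟨x, hx⟩ := hY y hyY R (by positivity) (ofReal_le_of_le
    (mul_le_of_le_one_left hyu.le (mod_cast hl1)) (ofReal_dist_le_ediam_univ y u))
  have hxy : dist x y < R := (hx (mem_ball_self (by positivity))).1
  -- `y` and `u` both lie within scale `R` of `x`, and `f` moves one of them far from `f x`.
  obtain ⟨p, hxp, hp⟩ : ∃ p, dist x p ≤ t * (c * R) ∧ r / (2 * K) ≤ dist (f x) (f p) := by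
    have htR : t * (c * R) = R + dist y u := by
      rw [ht, hR]
      push_cast
      field_simp
    by_contra! hfar
    have hy := hfar y (by linarith)
    have hu := hfar u (by linarith [dist_triangle x y u])
    have : r / K = r / (2 * K) + r / (2 * K) := by field_simp; norm_num
    linarith [dist_triangle_left (f y) (f u) (f x)]
  have hball : ball (f x) (1 / (2 * K * η t) * r) ⊆ f '' ball x (c * R) := by
    refine (ball_subset_ball ?_).trans (ball_subset_image_ball hη ht0 hxp)
    rw [le_div_iff₀ (by exact_mod_cast hηt)]
    exact le_of_eq_of_le (by field_simp) hp
  refine ⟨f x, hball.trans ?_⟩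
  rintro _ ⟨v, hv, rfl⟩
  obtain ⟨hvR, hvY⟩ := hx hv
  refine ⟨mem_ball'.2 (lt_of_le_of_lt ?_ hwr), fun h ↦ hvY (f.injective.mem_set_image.1 h)⟩
  calc dist (f y) (f v) ≤ η l * dist (f y) (f u) := hη.dist_le (mem_ball'.1 hvR).le
    _ ≤ dist (f y) (f u) := mul_le_of_le_one_left dist_nonneg (mod_cast hηl)

end Transfer

/-! ### Porous subsets of regular spaces -/

theorem sum_measure_le_of_card_le {α ι : Type*} [MeasurableSpace α] {μ : Measure α} {A : Finset ι}
    {H : ι → Set α} {S : Set α} {P : ℝ≥0∞} (hH : ∀ a ∈ A, MeasurableSet (H a))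
    (hHS : ∀ a ∈ A, H a ⊆ S) (hP : ∀ w, ∀ B ⊆ A, (∀ a ∈ B, w ∈ H a) → (B.card : ℝ≥0∞) ≤ P) :
    ∑ a ∈ A, μ (H a) ≤ P * μ S := by
  classical
  calc ∑ a ∈ A, μ (H a) = ∑ a ∈ A, ∫⁻ w in S, (H a).indicator 1 w ∂μ :=
        Finset.sum_congr rfl fun a ha ↦ by
          rw [lintegral_indicator_one (hH a ha), Measure.restrict_apply (hH a ha),
            inter_eq_left.2 (hHS a ha)]
    _ = ∫⁻ w in S, ∑ a ∈ A, (H a).indicator 1 w ∂μ :=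
        (lintegral_finsetSum _ fun a ha ↦ measurable_one.indicator (hH a ha)).symm
    _ ≤ ∫⁻ _ in S, P ∂μ := lintegral_mono fun w ↦ by
        simp only [indicator_apply, Pi.one_apply, Finset.sum_boole]
        exact hP w _ (Finset.filter_subset _ _) fun a ha ↦ (Finset.mem_filter.1 ha).2
    _ = P * μ S := setLIntegral_const S P

theorem ball_subset_infDist_preimage_Ico {W : Type*} [PseudoMetricSpace W] {Y : Set W} {a u : W}
    (ha : a ∈ Y) {s t : ℝ} (h : ball u (2 * s) ⊆ ball a t \ Y) :
    ball u s ⊆ ball a t ∩ (infDist · Y) ⁻¹' Ico s t := by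
  intro w hw
  rw [mem_ball] at hw
  have hwa : dist w a < t :=
    (h (mem_ball.2 (by linarith [dist_nonneg (x := w) (y := u)]))).1
  refine ⟨hwa, (le_infDist ⟨a, ha⟩).2 fun y hy ↦ ?_, (infDist_le_dist_of_mem ha).trans_lt hwa⟩
  by_contra! hwy
  exact (h (mem_ball.2 (by linarith [dist_triangle_left y u w]))).2 hy

theorem pairwise_disjoint_infDist_preimage_Ico {W : Type*} [PseudoMetricSpace W]
    {Y : Set W} {c q R : ℝ} (hq : 0 < q) (hq1 : q ≤ 1) (hqc : q ≤ c / 2) (hR : 0 ≤ R) :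
    Pairwise fun i j : ℕ ↦ Disjoint ((infDist · Y) ⁻¹' Ico (c * (q ^ i * R) / 4) (q ^ i * R / 2))
      ((infDist · Y) ⁻¹' Ico (c * (q ^ j * R) / 4) (q ^ j * R / 2)) := by
  refine (pairwise_disjoint_on fun i : ℕ ↦
    (infDist · Y) ⁻¹' Ico (c * (q ^ i * R) / 4) (q ^ i * R / 2)).2 fun i j hij ↦ ?_
  refine (Ico_disjoint_Ico.2 (min_le_of_right_le (le_max_of_le_left ?_))).preimage _
  calc q ^ j * R / 2 ≤ q ^ (i + 1) * R / 2 := by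
        have := pow_le_pow_of_le_one hq.le hq1 hij
        gcongr
    _ = q * (q ^ i * R) / 2 := by ring
    _ ≤ c / 2 * (q ^ i * R) / 2 := by gcongr
    _ = c * (q ^ i * R) / 4 := by ring

theorem _root_.Porous.exists_le_one {X : Type*} [MetricSpace X] {Y : Set X} (hY : Porous Y) :
    ∃ c : ℝ, 0 < c ∧ c ≤ 1 ∧ ∀ y ∈ Y, ∀ r : ℝ, 0 < r → ENNReal.ofReal r ≤ ediam (univ : Set X) →
      ∃ x : X, ball x (c * r) ⊆ ball y r \ Y := by
  obtain ⟨c, hc, h⟩ := hY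
  refine ⟨min c 1, lt_min hc one_pos, min_le_right _ _, fun y hy r hr hrd ↦ ?_⟩
  obtain ⟨x, hx⟩ := h y hy r hr hrd
  exact ⟨x, (ball_subset_ball (by gcongr; exact min_le_left _ _)).trans hx⟩

theorem exists_pow_scale {q Q : ℝ} (hq : 0 < q) (hq1 : q < 1) (hQ : 0 < Q) {B : ℝ} (hB : 0 ≤ B) :
    ∃ n N : ℕ, 1 ≤ n ∧ 2 ≤ N ∧ N * (q ^ n) ^ Q < 1 ∧
      ∀ m : ℕ, n * (m * (q ^ n) ^ Q) ≤ B → m ≤ N := by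
  have hsmall : ∀ᶠ n : ℕ in atTop, 2 * (q ^ n) ^ Q < 1 := by
    have htend := tendsto_pow_atTop_nhds_zero_of_lt_one (by positivity)
      (Real.rpow_lt_one hq.le hq1 hQ)
    filter_upwards [htend.eventually_lt_const (by norm_num : (0 : ℝ) < 1 / 2)] with n hn
    rw [Real.rpow_pow_comm hq.le] at hn
    linarith
  obtain ⟨n, hn, hBn, hn1⟩ := (hsmall.and ((tendsto_natCast_atTop_atTop.eventually_gt_atTop B).and
    (eventually_ge_atTop 1))).exists
  have hn0 : (0 : ℝ) < n := mod_cast hn1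
  have hpos : 0 < (q ^ n) ^ Q := by positivity
  refine ⟨n, max 2 ⌊B / n / (q ^ n) ^ Q⌋₊, hn1, le_max_left _ _, ?_, fun m hm ↦ ?_⟩
  · rw [Nat.cast_max, max_mul_of_nonneg _ _ hpos.le]
    refine max_lt (mod_cast hn) ?_
    calc (⌊B / n / (q ^ n) ^ Q⌋₊ : ℝ) * (q ^ n) ^ Q ≤ B / n / (q ^ n) ^ Q * (q ^ n) ^ Q := by
          gcongr
          exact Nat.floor_le (by positivity)
      _ = B / n := by field_simp
      _ < 1 := (div_lt_one hn0).2 hBn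
  · refine le_max_of_le_right (Nat.le_floor ?_)
    rw [le_div_iff₀ hpos, le_div_iff₀ hn0, mul_comm]
    exact hm

section Counting

variable {W : Type*} [MetricSpace W] [MeasurableSpace W] [BorelSpace W] {μ : Measure W} {C Q : ℝ}

theorem AhlforsBounds.card_le_of_separated (hμ : AhlforsBounds μ C Q) (hC : 0 < C)
    {r t : ℝ} (hr : 0 < r) (hrt : r ≤ t) (htd : ENNReal.ofReal t ≤ ediam (univ : Set W)) {w : W}
    {A : Finset W} (hA : ↑A ⊆ ball w (t / 2))
    (hsep : (A : Set W).Pairwise fun a b ↦ r ≤ dist a b) :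
    (A.card : ℝ) ≤ C ^ 2 * (2 * t / r) ^ Q := by
  have ht : 0 < t := hr.trans_le hrt
  have hdisj : (A : Set W).PairwiseDisjoint fun a ↦ ball a (r / 2) := fun a ha b hb hab ↦
    ball_disjoint_ball (by linarith [hsep ha hb hab])
  have hsub : (⋃ a ∈ A, ball a (r / 2)) ⊆ ball w t := iUnion₂_subset fun a ha ↦
    ball_subset_ball' (by linarith [mem_ball.1 (hA ha)])
  have hvol : ∑ _a ∈ A, ENNReal.ofReal (C⁻¹ * (r / 2) ^ Q) ≤ ENNReal.ofReal (C * t ^ Q) := calc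
    _ ≤ ∑ a ∈ A, μ (ball a (r / 2)) := Finset.sum_le_sum fun a _ ↦
      (hμ a (r / 2) (by positivity) (ofReal_le_of_le (by linarith) htd)).1
    _ = μ (⋃ a ∈ A, ball a (r / 2)) :=
      (measure_biUnion_finset hdisj fun _ _ ↦ isOpen_ball.measurableSet).symm
    _ ≤ μ (ball w t) := measure_mono hsub
    _ ≤ _ := (hμ w t ht htd).2
  rw [Finset.sum_const, nsmul_eq_mul, ← ENNReal.ofReal_natCast,
    ← ENNReal.ofReal_mul (by positivity), ENNReal.ofReal_le_ofReal_iff (by positivity),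
    ← le_div_iff₀ (by positivity)] at hvol
  refine hvol.trans_eq ?_
  rw [show 2 * t / r = t / (r / 2) by field_simp, Real.div_rpow ht.le (by positivity)]
  field_simp

variable {Y : Set W} {c : ℝ}

-- Each point of `A` has a hole of size comparable to `t` at distance about `t` from `Y`; the holes
-- overlap at most `C² (2t/r)^Q` times, and the scale `t` cancels from the total volume.
theorem AhlforsBounds.ofReal_card_mul_le_measure_shell (hμ : AhlforsBounds μ C Q) (hC : 0 < C)
    (hc : 0 < c) (hc1 : c ≤ 1)
    (hY : ∀ y ∈ Y, ∀ r : ℝ, 0 < r → ENNReal.ofReal r ≤ ediam (univ : Set W) →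
      ∃ x : W, ball x (c * r) ⊆ ball y r \ Y)
    {r t R : ℝ} (hr : 0 < r) (hrt : r ≤ t) (htR : t ≤ R)
    (hRd : ENNReal.ofReal (2 * R) ≤ ediam (univ : Set W)) {x : W} {A : Finset W}
    (hA : ↑A ⊆ ball x R ∩ Y) (hsep : (A : Set W).Pairwise fun a b ↦ r ≤ dist a b) :
    ENNReal.ofReal (A.card * r ^ Q * (C⁻¹ ^ 3 * (c / 8) ^ Q)) ≤
      μ (ball x (2 * R) ∩ (infDist · Y) ⁻¹' Ico (c * t / 4) (t / 2)) := by
  have ht : 0 < t := hr.trans_le hrt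
  choose! u hu using fun a (ha : a ∈ A) ↦ hY a (hA ha).2 (t / 2) (by positivity)
    (ofReal_le_of_le (by linarith) hRd)
  have hole : ∀ a ∈ A, ball (u a) (c * t / 4) ⊆
      ball a (t / 2) ∩ (infDist · Y) ⁻¹' Ico (c * t / 4) (t / 2) := fun a ha ↦
    ball_subset_infDist_preimage_Ico (hA ha).2 <| by
      rw [show 2 * (c * t / 4) = c * (t / 2) by ring]
      exact hu a ha
  set P : ℝ := C ^ 2 * (2 * t / r) ^ Q with hP
  have hP0 : 0 < P := by positivity
  have hupper : ∑ a ∈ A, μ (ball (u a) (c * t / 4)) ≤ ENNReal.ofReal P *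
      μ (ball x (2 * R) ∩ (infDist · Y) ⁻¹' Ico (c * t / 4) (t / 2)) := by
    refine sum_measure_le_of_card_le (fun _ _ ↦ isOpen_ball.measurableSet) (fun a ha ↦
      (hole a ha).trans (inter_subset_inter_left _ (ball_subset_ball' ?_))) fun w B hBA hB ↦ ?_
    · linarith [mem_ball.1 (hA ha).1]
    · rw [← ENNReal.ofReal_natCast]
      exact ENNReal.ofReal_le_ofReal <| hμ.card_le_of_separated hC hr hrt
        (ofReal_le_of_le (by linarith) hRd)
        (fun a ha ↦ mem_ball_comm.1 (hole a (hBA ha) (hB a ha)).1) (hsep.mono hBA)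
  have hlower : ENNReal.ofReal (A.card * (C⁻¹ * (c * t / 4) ^ Q)) ≤
      ∑ a ∈ A, μ (ball (u a) (c * t / 4)) := by
    rw [ENNReal.ofReal_mul (by positivity), ENNReal.ofReal_natCast, ← nsmul_eq_mul,
      ← Finset.sum_const]
    exact Finset.sum_le_sum fun a _ ↦
      (hμ (u a) (c * t / 4) (by positivity) (ofReal_le_of_le (by nlinarith) hRd)).1
  have hscale : A.card * r ^ Q * (C⁻¹ ^ 3 * (c / 8) ^ Q) =
      P⁻¹ * (A.card * (C⁻¹ * (c * t / 4) ^ Q)) := by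
    rw [show c * t / 4 = c / 8 * (2 * t / r) * r by field_simp; norm_num,
      Real.mul_rpow (by positivity) hr.le, Real.mul_rpow (by positivity) (by positivity), hP]
    field_simp
  rw [hscale, ENNReal.ofReal_mul (by positivity), ENNReal.ofReal_inv_of_pos hP0,
    ENNReal.inv_mul_le_iff (by simpa using hP0) ENNReal.ofReal_ne_top]
  exact hlower.trans hupper

theorem AhlforsBounds.mul_card_le_of_porous (hμ : AhlforsBounds μ C Q) (hC : 0 < C)
    (hc : 0 < c) (hc1 : c ≤ 1)
    (hY : ∀ y ∈ Y, ∀ r : ℝ, 0 < r → ENNReal.ofReal r ≤ ediam (univ : Set W) →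
      ∃ x : W, ball x (c * r) ⊆ ball y r \ Y)
    {q R : ℝ} (hq : 0 < q) (hqc : q ≤ c / 2) (hR : 0 < R)
    (hRd : ENNReal.ofReal (2 * R) ≤ ediam (univ : Set W)) (n : ℕ) {x : W} {A : Finset W}
    (hA : ↑A ⊆ ball x R ∩ Y) (hsep : (A : Set W).Pairwise fun a b ↦ q ^ n * R ≤ dist a b) :
    n * (A.card * (q ^ n) ^ Q) ≤ C * 2 ^ Q / (C⁻¹ ^ 3 * (c / 8) ^ Q) := by
  have hq1 : q ≤ 1 := by linarith
  set κ := C⁻¹ ^ 3 * (c / 8) ^ Q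
  set S : ℕ → Set W := fun j ↦
    ball x (2 * R) ∩ (infDist · Y) ⁻¹' Ico (c * (q ^ j * R) / 4) (q ^ j * R / 2)
  have hSmeas : ∀ j ∈ Finset.range n, MeasurableSet (S j) := fun j _ ↦
    isOpen_ball.measurableSet.inter ((continuous_infDist_pt Y).measurable measurableSet_Ico)
  have hSdisj : (Finset.range n : Set ℕ).PairwiseDisjoint S := fun i _ j _ hij ↦
    (pairwise_disjoint_infDist_preimage_Ico hq hq1 hqc hR.le hij).mono inter_subset_right
      inter_subset_right
  have hvol : ∑ _j ∈ Finset.range n, ENNReal.ofReal (A.card * (q ^ n * R) ^ Q * κ) ≤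
      ENNReal.ofReal (C * (2 * R) ^ Q) := calc
    _ ≤ ∑ j ∈ Finset.range n, μ (S j) := Finset.sum_le_sum fun j hj ↦ by
      refine hμ.ofReal_card_mul_le_measure_shell hC hc hc1 hY (by positivity) ?_ ?_ hRd hA hsep
      · have := pow_le_pow_of_le_one hq.le hq1 (Finset.mem_range.1 hj).le
        gcongr
      · exact mul_le_of_le_one_left hR.le (pow_le_one₀ hq.le hq1)
    _ = μ (⋃ j ∈ Finset.range n, S j) := (measure_biUnion_finset hSdisj hSmeas).symm
    _ ≤ μ (ball x (2 * R)) := measure_mono (iUnion₂_subset fun _ _ ↦ inter_subset_left)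
    _ ≤ _ := (hμ x (2 * R) (by positivity) hRd).2
  rw [Finset.sum_const, nsmul_eq_mul, Finset.card_range, ← ENNReal.ofReal_natCast,
    ← ENNReal.ofReal_mul (by positivity), ENNReal.ofReal_le_ofReal_iff (by positivity),
    Real.mul_rpow (by positivity) hR.le, Real.mul_rpow two_pos.le hR.le] at hvol
  rw [le_div_iff₀ (by positivity)]
  refine le_of_mul_le_mul_right ?_ (Real.rpow_pos_of_pos hR Q)
  linarith

theorem AhlforsBounds.exists_card_le_of_porous (hμ : AhlforsBounds μ C Q) (hC : 0 < C)
    (hQ : 0 < Q) (hY : Porous Y) :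
    ∃ (ρ : ℝ) (N : ℕ), 0 < ρ ∧ ρ ≤ 1 / 20 ∧ 2 ≤ N ∧ N * ρ ^ Q < 1 ∧
      ∀ (x : W) (R : ℝ), 0 < R → ENNReal.ofReal (2 * R) ≤ ediam (univ : Set W) →
        ∀ A : Finset W, ↑A ⊆ ball x R ∩ Y →
          (A : Set W).Pairwise (fun a b ↦ ρ * R ≤ dist a b) → A.card ≤ N := by
  obtain ⟨c, hc, hc1, hY⟩ := hY.exists_le_one
  set q := min (c / 2) (1 / 20)
  have hq : 0 < q := lt_min (by positivity) (by norm_num)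
  have hq20 : q ≤ 1 / 20 := min_le_right _ _
  obtain ⟨n, N, hn, hN, hNq, hcard⟩ := exists_pow_scale hq (by linarith) hQ
    (B := C * 2 ^ Q / (C⁻¹ ^ 3 * (c / 8) ^ Q)) (by positivity)
  refine ⟨q ^ n, N, by positivity, ?_, hN, hNq, fun x R hR hRd A hA hsep ↦ hcard _ <|
    hμ.mul_card_le_of_porous hC hc hc1 hY hq (min_le_left _ _) hR hRd n hA hsep⟩
  exact (pow_le_of_le_one hq.le (by linarith) (by omega)).trans hq20

end Counting

/-! ### Nets and weights -/

section Nets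

/-- At scales up to `T`, a `ρ R`-separated set in a ball of radius `R` has at most `N` points. This
is the only trace of porosity used in the construction of measures: for a porous subset of an
Ahlfors `Q`-regular space it holds with `N ρ ^ Q < 1`. -/
def CountingBound (Z : Type*) [PseudoMetricSpace Z] (ρ : ℝ) (N : ℕ) (T : ℝ≥0∞) : Prop :=
  ∀ (x : Z) (R : ℝ), 0 < R → ENNReal.ofReal R ≤ T →
    ∀ A ⊆ ball x R, A.Pairwise (fun a b ↦ ρ * R ≤ dist a b) → A.encard ≤ N

theorem encard_le_of_finset_card_le {α : Type*} {S : Set α} {N : ℕ}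
    (h : ∀ A : Finset α, ↑A ⊆ S → A.card ≤ N) : S.encard ≤ N := by
  by_contra! hN
  obtain ⟨A, hAS, hA⟩ := exists_subset_encard_eq (k := N + 1) (Order.add_one_le_of_lt hN)
  obtain ⟨A, rfl⟩ := (finite_of_encard_eq_coe (k := N + 1) hA).exists_finset_coe
  rw [encard_coe_eq_coe_finsetCard] at hA
  have hA' : A.card = N + 1 := by exact_mod_cast hA
  exact absurd (h A hAS) (by lia)

theorem exists_maximal_separated {Z : Type*} [PseudoMetricSpace Z] {S₀ : Set Z} {ε : ℝ}
    (hε : 0 < ε) (h₀ : S₀.Pairwise fun a b ↦ ε ≤ dist a b) :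
    ∃ S, S₀ ⊆ S ∧ S.Pairwise (fun a b ↦ ε ≤ dist a b) ∧ ∀ z, ∃ a ∈ S, dist z a < ε := by
  obtain ⟨S, hS₀, hS⟩ := zorn_subset_nonempty {S : Set Z | S.Pairwise fun a b ↦ ε ≤ dist a b}
    (fun c hc hchain _ ↦ ⟨⋃₀ c, (pairwise_sUnion hchain.directedOn).2 hc,
      fun _ ↦ subset_sUnion_of_mem⟩) S₀ h₀
  refine ⟨S, hS₀, hS.prop, fun z ↦ ?_⟩
  by_contra! hfar
  have hins : (insert z S).Pairwise fun a b ↦ ε ≤ dist a b :=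
    hS.prop.insert fun b hb _ ↦ ⟨hfar b hb, dist_comm z b ▸ hfar b hb⟩
  have hz : z ∈ S := hS.le_of_ge hins (subset_insert _ _) (mem_insert _ _)
  exact absurd (hfar z hz) (by rwa [dist_self, not_le])

/-- A tree of nets: `net j` is a maximal `ρ ^ j * L`-separated set, the nets increase with `j`,
and `parent j` assigns to each point a point of `net j` nearby, the nearest one when it is within
half of the scale. -/
structure NetTree (Z : Type*) [PseudoMetricSpace Z] (ρ L : ℝ) where
  net : ℕ → Set Z
  parent : ℕ → Z → Z
  separated j : (net j).Pairwise fun a b ↦ ρ ^ j * L ≤ dist a b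
  net_subset j : net j ⊆ net (j + 1)
  parent_mem j z : parent j z ∈ net j
  dist_parent_lt j z : dist z (parent j z) < ρ ^ j * L
  parent_eq j z : ∀ b ∈ net j, dist z b < ρ ^ j * L / 2 → parent j z = b

theorem exists_parent {Z : Type*} [PseudoMetricSpace Z] {S : Set Z} {ε : ℝ} (hε : 0 < ε)
    (hsep : S.Pairwise fun a b ↦ ε ≤ dist a b) (hdense : ∀ z, ∃ a ∈ S, dist z a < ε) (z : Z) :
    ∃ a ∈ S, dist z a < ε ∧ ∀ b ∈ S, dist z b < ε / 2 → a = b := by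
  by_cases hnear : ∃ a ∈ S, dist z a < ε / 2
  · obtain ⟨a, ha, hza⟩ := hnear
    refine ⟨a, ha, by linarith, fun b hb hzb ↦ ?_⟩
    by_contra hab
    linarith [hsep ha hb hab, dist_triangle_left a b z]
  · push Not at hnear
    obtain ⟨a, ha, hza⟩ := hdense z
    exact ⟨a, ha, hza, fun b hb hzb ↦ absurd hzb (hnear b hb).not_gt⟩

variable {Z : Type*} [PseudoMetricSpace Z] {ρ L : ℝ}

theorem nonempty_netTree (hρ : 0 < ρ) (hρ1 : ρ ≤ 1) (hL : 0 < L) : Nonempty (NetTree Z ρ L) := by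
  have hscale (j : ℕ) : 0 < ρ ^ j * L := by positivity
  have hanti (j : ℕ) : ρ ^ (j + 1) * L ≤ ρ ^ j * L := by
    have := pow_le_pow_of_le_one hρ.le hρ1 j.le_succ
    gcongr
  choose! F hsub hsep hdense using fun (S₀ : Set Z) (j : ℕ) ↦
    exists_maximal_separated (S₀ := S₀) (hscale j)
  let net (j : ℕ) : Set Z := j.rec (F ∅ 0) fun j S ↦ F S (j + 1)
  have hnet (j : ℕ) : (net j).Pairwise (fun a b ↦ ρ ^ j * L ≤ dist a b) ∧
      ∀ z, ∃ a ∈ net j, dist z a < ρ ^ j * L := by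
    induction j with
    | zero => exact ⟨hsep _ _ (pairwise_empty _), hdense _ _ (pairwise_empty _)⟩
    | succ j ih =>
      have h := ih.1.mono' fun a b hab ↦ (hanti j).trans hab
      exact ⟨hsep _ _ h, hdense _ _ h⟩
  choose parent hmem hdist heq using fun j ↦ exists_parent (hscale j) (hnet j).1 (hnet j).2
  exact ⟨⟨net, parent, fun j ↦ (hnet j).1,
    fun j ↦ hsub _ _ ((hnet j).1.mono' fun a b hab ↦ (hanti j).trans hab), hmem, hdist, heq⟩⟩

end Nets

namespace NetTree

variable {Z : Type*} [PseudoMetricSpace Z] {ρ L : ℝ} (H : NetTree Z ρ L)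

/-- The points of `net (j + 1)` whose parent is `x`. -/
def children (j : ℕ) (x : Z) : Set Z :=
  {y ∈ H.net (j + 1) | H.parent j y = x}

theorem encard_children_le {N : ℕ} {T : ℝ≥0∞} (hZ : CountingBound Z ρ N T) (hρ : 0 < ρ)
    (hρ1 : ρ ≤ 1) (hL : 0 < L) (hLT : ENNReal.ofReal L ≤ T) (j : ℕ) (x : Z) :
    (H.children j x).encard ≤ N := by
  refine hZ x (ρ ^ j * L) (by positivity)
    (ofReal_le_of_le (mul_le_of_le_one_left hL.le (pow_le_one₀ hρ.le hρ1)) hLT) _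
    (fun y hy ↦ hy.2 ▸ H.dist_parent_lt j y) fun y hy z hz hyz ↦ ?_
  rw [← mul_assoc, ← pow_succ']
  exact H.separated (j + 1) hy.1 hz.1 hyz

section Weight

variable (N : ℕ)

open scoped Classical in
/-- The weights of Vol'berg and Konyagin: a point of `net j` gives `1 / N` of its weight to each of
its children other than itself, and keeps the rest. The truncated subtraction is harmless when
there are at most `N` children. -/
noncomputable def weight : ℕ → Z → ℝ≥0
  | 0, z => if z ∈ H.net 0 then 1 else 0
  | j + 1, z => if z ∈ H.net (j + 1) then
      if z ∈ H.net j then (N + 1 - (H.children j z).ncard : ℕ) / N * weight j z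
      else weight j (H.parent j z) / N
    else 0

variable {H N} {j : ℕ} {x y z : Z}

theorem weight_zero (hz : z ∈ H.net 0) : H.weight N 0 z = 1 := if_pos hz

theorem weight_eq_zero (hz : z ∉ H.net j) : H.weight N j z = 0 := by
  cases j <;> simp [weight, hz]

theorem weight_succ_of_mem (hz : z ∈ H.net j) :
    H.weight N (j + 1) z = (N + 1 - (H.children j z).ncard : ℕ) / N * H.weight N j z := by
  simp [weight, hz, H.net_subset j hz]

theorem weight_succ_of_notMem (hz : z ∈ H.net (j + 1)) (hzj : z ∉ H.net j) :
    H.weight N (j + 1) z = H.weight N j (H.parent j z) / N := by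
  simp [weight, hz, hzj]

theorem parent_eq_self (hρ : 0 < ρ) (hL : 0 < L) (hz : z ∈ H.net j) : H.parent j z = z :=
  H.parent_eq j z z hz (by rw [dist_self]; positivity)

section

variable (hρ : 0 < ρ) (hL : 0 < L) (hN : ∀ j x, (H.children j x).encard ≤ N)
include hρ hL hN

theorem one_le_ncard_children (hz : z ∈ H.net j) : 1 ≤ (H.children j z).ncard :=
  Nat.one_le_iff_ne_zero.2 (ncard_ne_zero_of_mem ⟨H.net_subset j hz, parent_eq_self hρ hL hz⟩
    (encard_le_coe_iff_finite_ncard_le.1 (hN j z)).1)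

theorem weight_parent_le_mul_weight (hy : y ∈ H.net (j + 1)) :
    H.weight N j (H.parent j y) ≤ N * H.weight N (j + 1) y := by
  have hcard := (encard_le_coe_iff_finite_ncard_le.1 (hN j (H.parent j y))).2
  have hN0 : (N : ℝ≥0) ≠ 0 := by
    have := one_le_ncard_children hρ hL hN (H.parent_mem j y)
    exact_mod_cast (by lia : N ≠ 0)
  by_cases hyj : y ∈ H.net j
  · rw [parent_eq_self hρ hL hyj] at hcard ⊢
    rw [weight_succ_of_mem hyj, ← mul_assoc, mul_div_cancel₀ _ hN0]
    exact le_mul_of_one_le_left' (by exact_mod_cast (by lia))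
  · rw [weight_succ_of_notMem hy hyj, mul_div_cancel₀ _ hN0]

theorem weight_succ_le_weight_parent (hy : y ∈ H.net (j + 1)) :
    H.weight N (j + 1) y ≤ H.weight N j (H.parent j y) := by
  have hcard := one_le_ncard_children hρ hL hN (H.parent_mem j y)
  have hcard' := (encard_le_coe_iff_finite_ncard_le.1 (hN j (H.parent j y))).2
  have hN1 : (1 : ℝ≥0) ≤ N := by exact_mod_cast hcard.trans hcard'
  by_cases hyj : y ∈ H.net j
  · rw [parent_eq_self hρ hL hyj] at hcard ⊢
    rw [weight_succ_of_mem hyj]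
    refine mul_le_of_le_one_left' (div_le_one_of_le₀ ?_ zero_le)
    exact_mod_cast (by lia)
  · rw [weight_succ_of_notMem hy hyj]
    exact div_le_self zero_le hN1

theorem sum_weight_children (x : Z) :
    ∑ y ∈ (encard_le_coe_iff_finite_ncard_le.1 (hN j x)).1.toFinset, H.weight N (j + 1) y =
      H.weight N j x := by
  classical
  obtain ⟨hfin, hcard⟩ := encard_le_coe_iff_finite_ncard_le.1 (hN j x)
  by_cases hx : x ∈ H.net j
  · have hcard1 := one_le_ncard_children hρ hL hN hx
    have hN0 : (N : ℝ≥0) ≠ 0 := by exact_mod_cast (by lia : N ≠ 0)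
    have hothers : ∀ y ∈ hfin.toFinset.erase x, H.weight N (j + 1) y = H.weight N j x / N := by
      intro y hy
      rw [Finset.mem_erase, hfin.mem_toFinset] at hy
      obtain ⟨hyx, hy, rfl⟩ := hy
      exact weight_succ_of_notMem hy fun hyj ↦ hyx (parent_eq_self hρ hL hyj).symm
    have hmem : x ∈ hfin.toFinset :=
      hfin.mem_toFinset.2 ⟨H.net_subset j hx, parent_eq_self hρ hL hx⟩
    rw [← Finset.add_sum_erase _ _ hmem, Finset.sum_congr rfl hothers, Finset.sum_const,
      Finset.card_erase_of_mem hmem, ← ncard_eq_toFinset_card _ hfin, weight_succ_of_mem hx,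
      nsmul_eq_mul, mul_div_left_comm, mul_comm (H.weight N j x), ← add_mul, ← add_div,
      ← Nat.cast_add, show N + 1 - (H.children j x).ncard + ((H.children j x).ncard - 1) = N by lia,
      div_self hN0, one_mul]
  · rw [weight_eq_zero hx]
    refine Finset.sum_eq_zero fun y hy ↦ ?_
    exact absurd ((hfin.mem_toFinset.1 hy).2 ▸ H.parent_mem j y) hx

-- The induction closes because a point whose parents differ from those of a close point is new,
-- and so carries exactly `1 / N` of the weight of its parent.
theorem weight_le_mul_weight_of_dist_le (hρ1 : ρ ≤ 1 / 20) (hx : x ∈ H.net j) (hy : y ∈ H.net j)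
    (hxy : dist x y ≤ 8 * (ρ ^ j * L)) : H.weight N j x ≤ N * H.weight N j y := by
  have hN1 : (1 : ℝ≥0) ≤ N := by
    exact_mod_cast (one_le_ncard_children hρ hL hN hx).trans
      (encard_le_coe_iff_finite_ncard_le.1 (hN j x)).2
  induction j generalizing x y with
  | zero => rwa [weight_zero hx, weight_zero hy, mul_one]
  | succ j ih =>
    have hε : 0 < ρ ^ j * L := by positivity
    have hxy' : dist x y ≤ 8 / 20 * (ρ ^ j * L) := by
      rw [pow_succ] at hxy
      nlinarith
    by_cases hP : H.parent j x = H.parent j y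
    · calc H.weight N (j + 1) x ≤ H.weight N j (H.parent j x) :=
            weight_succ_le_weight_parent hρ hL hN hx
        _ ≤ N * H.weight N (j + 1) y := hP ▸ weight_parent_le_mul_weight hρ hL hN hy
    · have hxj : x ∉ H.net j := fun hxj ↦ hP <| (parent_eq_self hρ hL hxj).trans
        (H.parent_eq j y x hxj (by rw [dist_comm]; linarith)).symm
      have hPd : dist (H.parent j x) (H.parent j y) ≤ 8 * (ρ ^ j * L) := by
        linarith [dist_triangle4 (H.parent j x) x y (H.parent j y), H.dist_parent_lt j x,
          H.dist_parent_lt j y, dist_comm (H.parent j x) x]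
      rw [weight_succ_of_notMem hx hxj]
      refine NNReal.div_le_of_le_mul' ?_
      calc H.weight N j (H.parent j x) ≤ N * H.weight N j (H.parent j y) :=
            ih (H.parent_mem j x) (H.parent_mem j y) hPd
        _ ≤ N * (N * H.weight N (j + 1) y) := by
            gcongr
            exact weight_parent_le_mul_weight hρ hL hN hy

end

end Weight

end NetTree

namespace NetTree

variable {Z : Type*} [PseudoMetricSpace Z] {ρ L : ℝ} {H : NetTree Z ρ L} {N j l m : ℕ} {x y z : Z}

variable (H N j) in
/-- Integration against the weights of level `j`. It is kept apart from `discreteMeasure` because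
`parent j` need not be Borel measurable. -/
noncomputable def levelSum (g : Z → ℝ≥0∞) : ℝ≥0∞ :=
  ∑' z, H.weight N j z * g z

theorem levelSum_mono {g h : Z → ℝ≥0∞} (hgh : ∀ z ∈ H.net j, g z ≤ h z) :
    H.levelSum N j g ≤ H.levelSum N j h := by
  refine ENNReal.tsum_le_tsum fun z ↦ ?_
  by_cases hz : z ∈ H.net j
  · gcongr
    exact hgh z hz
  · simp [weight_eq_zero hz]

theorem levelSum_indicator_finset (F : Finset Z) :
    H.levelSum N j ((F : Set Z).indicator 1) = ∑ z ∈ F, (H.weight N j z : ℝ≥0∞) := by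
  rw [← Finset.tsum_subtype', tsum_subtype (F : Set Z) fun z ↦ (H.weight N j z : ℝ≥0∞), levelSum]
  refine tsum_congr fun z ↦ ?_
  by_cases hz : z ∈ (F : Set Z) <;> simp [hz]

variable (H l) in
/-- The ancestor in `net l` of a point of `net (l + q)`. -/
def ancestor : ℕ → Z → Z
  | 0 => id
  | q + 1 => fun z ↦ ancestor q (H.parent (l + q) z)

theorem ancestor_mem {q : ℕ} (hz : z ∈ H.net (l + q)) : H.ancestor l q z ∈ H.net l := by
  induction q generalizing z with
  | zero => exact hz
  | succ q ih => exact ih (H.parent_mem _ _)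

theorem dist_ancestor_le (hρ : 0 < ρ) (hρ1 : ρ ≤ 1 / 2) (hL : 0 < L) (l q : ℕ) (z : Z) :
    dist z (H.ancestor l q z) ≤ 2 * (ρ ^ l * L - ρ ^ (l + q) * L) := by
  induction q generalizing z with
  | zero => simp [ancestor]
  | succ q ih =>
    have hstep : ρ ^ (l + (q + 1)) * L ≤ 1 / 2 * (ρ ^ (l + q) * L) := by
      rw [← add_assoc, pow_succ', mul_assoc]
      gcongr
    calc dist z (H.ancestor l (q + 1) z)
        ≤ dist z (H.parent (l + q) z) +
          dist (H.parent (l + q) z) (H.ancestor l q (H.parent (l + q) z)) := dist_triangle _ _ _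
      _ ≤ ρ ^ (l + q) * L + 2 * (ρ ^ l * L - ρ ^ (l + q) * L) :=
          add_le_add (H.dist_parent_lt _ _).le (ih _)
      _ ≤ 2 * (ρ ^ l * L - ρ ^ (l + (q + 1)) * L) := by linarith

section

variable (hρ : 0 < ρ) (hL : 0 < L) (hN : ∀ j x, (H.children j x).encard ≤ N)
include hρ hL hN

theorem tsum_weight_fiber (x : Z) :
    ∑' y : {y // H.parent j y = x}, (H.weight N (j + 1) y : ℝ≥0∞) = H.weight N j x := by
  rw [← sum_weight_children hρ hL hN x, ENNReal.ofNNReal_finsetSum]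
  refine (tsum_subtype {y | H.parent j y = x} fun y ↦ (H.weight N (j + 1) y : ℝ≥0∞)).trans ?_
  refine (tsum_eq_sum fun y hy ↦ ?_).trans (Finset.sum_congr rfl fun y hy ↦ ?_)
  · exact indicator_apply_eq_zero.2 fun hyx ↦ ENNReal.coe_eq_zero.2 <| weight_eq_zero fun hyj ↦
      hy ((Finite.mem_toFinset _).2 ⟨hyj, hyx⟩)
  · exact indicator_of_mem (s := {y | H.parent j y = x}) ((Finite.mem_toFinset _).1 hy).2 _

theorem levelSum_succ (g : Z → ℝ≥0∞) :
    H.levelSum N (j + 1) (fun z ↦ g (H.parent j z)) = H.levelSum N j g := by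
  simp only [levelSum]
  rw [← (Equiv.sigmaFiberEquiv (H.parent j)).tsum_eq, ENNReal.tsum_sigma']
  refine tsum_congr fun x ↦ ?_
  rw [← tsum_weight_fiber hρ hL hN x, ← ENNReal.tsum_mul_right]
  exact tsum_congr fun y ↦ congrArg (_ * g ·) y.2

theorem levelSum_ancestor (q : ℕ) (g : Z → ℝ≥0∞) :
    H.levelSum N (l + q) (fun z ↦ g (H.ancestor l q z)) = H.levelSum N l g := by
  induction q with
  | zero => rfl
  | succ q ih => exact (levelSum_succ hρ hL hN fun z ↦ g (H.ancestor l q z)).trans ih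

theorem weight_ancestor_le {q : ℕ} (hz : z ∈ H.net (l + q)) :
    H.weight N l (H.ancestor l q z) ≤ N ^ q * H.weight N (l + q) z := by
  induction q generalizing z with
  | zero => simp [ancestor]
  | succ q ih =>
    calc H.weight N l (H.ancestor l (q + 1) z)
        ≤ N ^ q * H.weight N (l + q) (H.parent (l + q) z) := ih (H.parent_mem _ _)
      _ ≤ N ^ q * (N * H.weight N (l + q + 1) z) := by
          gcongr
          exact weight_parent_le_mul_weight hρ hL hN hz
      _ = N ^ (q + 1) * H.weight N (l + (q + 1)) z := by rw [pow_succ, mul_assoc, add_assoc]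

end

section Measure

variable [MeasurableSpace Z]

variable (H N m) in
/-- The sum of point masses with the weights of level `m`. -/
noncomputable def discreteMeasure : Measure Z :=
  .sum fun z ↦ (H.weight N m z : ℝ≥0∞) • .dirac z

theorem discreteMeasure_apply {B : Set Z} (hB : MeasurableSet B) :
    H.discreteMeasure N m B = H.levelSum N m (B.indicator 1) := by
  rw [discreteMeasure, Measure.sum_apply _ hB, levelSum]
  exact tsum_congr fun z ↦ by rw [Measure.smul_apply, Measure.dirac_apply' z hB, smul_eq_mul]

variable [BorelSpace Z] (hρ : 0 < ρ) (hρ1 : ρ ≤ 1 / 20) (hL : 0 < L)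
include hρ hρ1 hL

theorem weight_le_discreteMeasure_ball (hN : ∀ j x, (H.children j x).encard ≤ N) {k : ℕ}
    (hkm : k ≤ m) {r : ℝ} (hr : dist y z + 2 * (ρ ^ k * L) < r) :
    H.weight N k z ≤ H.discreteMeasure N m (ball y r) := by
  obtain ⟨q, rfl⟩ := Nat.exists_eq_add_of_le hkm
  have hsingle : (H.weight N k z : ℝ≥0∞) =
      H.levelSum N k ((({z} : Finset Z) : Set Z).indicator 1) := by
    rw [levelSum_indicator_finset, Finset.sum_singleton]
  rw [discreteMeasure_apply isOpen_ball.measurableSet, hsingle,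
    ← levelSum_ancestor hρ hL hN q]
  refine levelSum_mono fun w _ ↦ ?_
  by_cases hw : H.ancestor k q w = z
  · have hwr : w ∈ ball y r := by
      have hpos : 0 < ρ ^ (k + q) * L := by positivity
      have hwz := hw ▸ H.dist_ancestor_le hρ (by linarith) hL k q w
      rw [mem_ball]
      linarith [dist_triangle_right w y z]
    simp [hwr, hw]
  · simp [hw]

theorem discreteMeasure_ball_le {T : ℝ≥0∞} (hZ : CountingBound Z ρ N T)
    (hLT : ENNReal.ofReal (L / ρ) ≤ T) (hN : ∀ j x, (H.children j x).encard ≤ N) (hlm : l ≤ m)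
    {R : ℝ} (hR : R ≤ ρ ^ l * L) {w₀ : ℝ≥0}
    (hw₀ : ∀ a ∈ H.net l, dist a x < 3 * (ρ ^ l * L) → H.weight N l a ≤ w₀) :
    H.discreteMeasure N m (ball x R) ≤ N * w₀ := by
  obtain ⟨q, rfl⟩ := Nat.exists_eq_add_of_le hlm
  have hε : 0 < ρ ^ l * L := by positivity
  have hcard : (H.net l ∩ ball x (3 * (ρ ^ l * L))).encard ≤ N := by
    refine hZ x (ρ ^ l * L / ρ) (by positivity) (ofReal_le_of_le ?_ hLT) _ ?_ ?_
    · gcongr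
      exact mul_le_of_le_one_left hL.le (pow_le_one₀ hρ.le (by linarith))
    · refine inter_subset_right.trans (ball_subset_ball ?_)
      rw [le_div_iff₀ hρ]
      nlinarith
    · rw [mul_div_cancel₀ _ hρ.ne']
      exact (H.separated l).mono inter_subset_left
  obtain ⟨F, hF⟩ := (encard_le_coe_iff_finite_ncard_le.1 hcard).1.exists_finset_coe
  rw [← hF, encard_coe_eq_coe_finsetCard] at hcard
  have hFN : F.card ≤ N := by exact_mod_cast hcard
  rw [discreteMeasure_apply isOpen_ball.measurableSet]
  calc H.levelSum N (l + q) ((ball x R).indicator 1)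
      ≤ H.levelSum N (l + q) (fun z ↦ (F : Set Z).indicator 1 (H.ancestor l q z)) := by
        refine levelSum_mono fun z hz ↦ ?_
        by_cases hzx : z ∈ ball x R
        · have hmem : H.ancestor l q z ∈ (F : Set Z) := by
            have hpos : 0 < ρ ^ (l + q) * L := by positivity
            rw [hF]
            refine ⟨ancestor_mem hz, mem_ball.2 ?_⟩
            linarith [H.dist_ancestor_le hρ (by linarith) hL l q z, mem_ball.1 hzx,
              dist_triangle_left (H.ancestor l q z) x z]
          simp [hzx, hmem]
        · simp [hzx]
    _ = ∑ a ∈ F, (H.weight N l a : ℝ≥0∞) := by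
        rw [levelSum_ancestor hρ hL hN, levelSum_indicator_finset]
    _ ≤ ∑ _a ∈ F, (w₀ : ℝ≥0∞) := Finset.sum_le_sum fun a ha ↦ by
        have ha' : a ∈ H.net l ∩ ball x (3 * (ρ ^ l * L)) := hF ▸ ha
        exact_mod_cast hw₀ a ha'.1 ha'.2
    _ ≤ N * w₀ := by
        rw [Finset.sum_const, nsmul_eq_mul]
        gcongr

theorem discreteMeasure_ball_le_mul_of_le {T : ℝ≥0∞} (hZ : CountingBound Z ρ N T)
    (hLT : ENNReal.ofReal (L / ρ) ≤ T) (hN : ∀ j x, (H.children j x).encard ≤ N) {q : ℕ}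
    (hm : l + q ≤ m) {r R : ℝ} (hR : R ≤ ρ ^ l * L) (hr : 4 * (ρ ^ (l + q) * L) ≤ r)
    (hxy : dist x y ≤ R) :
    H.discreteMeasure N m (ball x R) ≤ N ^ (q + 2) * H.discreteMeasure N m (ball y r) := by
  have hpos : 0 < ρ ^ (l + q) * L := by positivity
  have hle : ρ ^ (l + q) * L ≤ ρ ^ l * L := by
    have := pow_le_pow_of_le_one hρ.le (by linarith) (Nat.le_add_right l q)
    gcongr
  have hmem := H.parent_mem (l + q) y
  have hdist := H.dist_parent_lt (l + q) y
  set y' := H.parent (l + q) y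
  have hupper := discreteMeasure_ball_le (m := m) (x := x)
    (w₀ := N * (N ^ q * H.weight N (l + q) y')) hρ hρ1 hL hZ hLT hN (by lia) hR fun a ha hax ↦ by
      refine (weight_le_mul_weight_of_dist_le hρ hL hN hρ1 ha (ancestor_mem hmem) ?_).trans
        (mul_le_mul_right (weight_ancestor_le hρ hL hN hmem) _)
      linarith [dist_triangle4 a x y y', dist_triangle a y' (H.ancestor l q y'),
        H.dist_ancestor_le hρ (by linarith) hL l q y']
  calc H.discreteMeasure N m (ball x R)
      ≤ N * ↑(N * (N ^ q * H.weight N (l + q) y')) := hupper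
    _ = N ^ (q + 2) * H.weight N (l + q) y' := by
        push_cast
        ring
    _ ≤ N ^ (q + 2) * H.discreteMeasure N m (ball y r) := by
        gcongr
        exact weight_le_discreteMeasure_ball hρ hρ1 hL hN hm (by linarith)

end Measure

end NetTree

theorem exists_scales {ρ L : ℝ} (hρ : 0 < ρ) (hρ1 : ρ < 1) (hL : 0 < L) {m : ℕ} {r R : ℝ}
    (hr : 4 * (ρ ^ m * L) < r) (hrR : r ≤ R) (hRL : R ≤ L) :
    ∃ l q : ℕ, l + q ≤ m ∧ R ≤ ρ ^ l * L ∧ 4 * (ρ ^ (l + q) * L) ≤ r ∧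
      ρ⁻¹ ^ q ≤ 4 * ρ⁻¹ ^ 2 * (R / r) := by
  have hr0 : 0 < r := lt_of_le_of_lt (by positivity) hr
  obtain ⟨l, hl1, hl2⟩ := exists_nat_pow_near_of_lt_one (x := R / L) (y := ρ)
    (div_pos (hr0.trans_le hrR) hL) ((div_le_one hL).2 hRL) hρ hρ1
  obtain ⟨k, hk1, hk2⟩ := exists_nat_pow_near_of_lt_one (x := r / (4 * L)) (y := ρ)
    (by positivity) ((div_le_one (by positivity)).2 (by linarith)) hρ hρ1
  rw [lt_div_iff₀ (by positivity)] at hl1 hk1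
  rw [div_le_iff₀ (by positivity)] at hl2 hk2
  have hkm : k + 1 ≤ m := by
    rw [Nat.succ_le_iff, ← pow_lt_pow_iff_right_of_lt_one₀ hρ hρ1]
    by_contra! hmk
    nlinarith
  have hlk : l ≤ k + 1 := by
    rw [← pow_le_pow_iff_right_of_lt_one₀ hρ hρ1]
    by_contra! hlk
    nlinarith [show 0 < ρ ^ (k + 1) * L by positivity]
  obtain ⟨q, hq⟩ := Nat.exists_eq_add_of_le hlk
  refine ⟨l, q, hq ▸ hkm, hl2, by rw [← hq]; linarith, ?_⟩
  have hpow : ρ ^ k = ρ ^ l * ρ ^ q * ρ⁻¹ := by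
    rw [← pow_add, ← hq, pow_succ, mul_inv_cancel_right₀ hρ.ne']
  have hcross : ρ * r ≤ R * (4 * ρ ^ q * ρ⁻¹) := by
    refine le_of_mul_le_mul_left ?_ (show 0 < ρ ^ l * L by positivity)
    calc ρ ^ l * L * (ρ * r) = ρ ^ (l + 1) * L * r := by ring
      _ ≤ R * (ρ ^ k * (4 * L)) := by
          gcongr
          exact hr0.le.trans hrR
      _ = ρ ^ l * L * (R * (4 * ρ ^ q * ρ⁻¹)) := by rw [hpow]; ring
  rw [inv_pow]
  calc (ρ ^ q)⁻¹ = (ρ ^ q)⁻¹ * ρ⁻¹ / r * (ρ * r) := by field_simp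
    _ ≤ (ρ ^ q)⁻¹ * ρ⁻¹ / r * (R * (4 * ρ ^ q * ρ⁻¹)) := by gcongr
    _ = 4 * ρ⁻¹ ^ 2 * (R / r) := by field_simp

theorem natCast_pow_le_rpow {ρ s a : ℝ} {N q : ℕ} (hρ : 0 < ρ) (hs : 0 ≤ s) (hN : ρ⁻¹ ^ s = N)
    (ha : ρ⁻¹ ^ q ≤ a) : (N : ℝ) ^ q ≤ a ^ s := by
  rw [← hN, Real.rpow_pow_comm (by positivity)]
  exact Real.rpow_le_rpow (by positivity) ha hs

theorem exists_discrete_measure {Z : Type*} [PseudoMetricSpace Z] [MeasurableSpace Z] [BorelSpace Z]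
    {ρ : ℝ} {N : ℕ} {T : ℝ≥0∞} (hρ : 0 < ρ) (hρ1 : ρ ≤ 1 / 20) (hZ : CountingBound Z ρ N T)
    (hN : 1 ≤ N) {s : ℝ} (hs : 0 ≤ s) (hρs : ρ⁻¹ ^ s = N) {L : ℝ} (hL : 0 < L)
    (hLT : ENNReal.ofReal (L / ρ) ≤ T) {m : ℕ} (hm : 1 ≤ m) :
    ∃ ν : Measure Z, (∀ x, (N : ℝ≥0∞)⁻¹ ≤ ν (ball x L) ∧ ν (ball x L) ≤ N) ∧
      ∀ x y r R, 4 * (ρ ^ m * L) < r → r ≤ R → R ≤ L → dist x y ≤ R →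
        ν (ball x R) ≤
          ENNReal.ofReal (N ^ 2 * (4 * ρ⁻¹ ^ 2) ^ s * (R / r) ^ s) * ν (ball y r) := by
  obtain ⟨H⟩ := nonempty_netTree (Z := Z) hρ (by linarith) hL
  have hH := H.encard_children_le hZ hρ (by linarith) hL
    (ofReal_le_of_le (le_div_self hL.le hρ (by linarith)) hLT)
  refine ⟨H.discreteMeasure N m, fun x ↦ ⟨?_, ?_⟩, fun x y r R hr hrR hRL hxy ↦ ?_⟩
  · have hweight := H.weight_parent_le_mul_weight hρ hL hH (H.parent_mem 1 x)
    rw [H.weight_zero (H.parent_mem 0 _)] at hweight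
    refine le_trans ?_ (H.weight_le_discreteMeasure_ball hρ hρ1 hL hH hm (z := H.parent 1 x) ?_)
    · rw [ENNReal.inv_le_iff_le_mul (by simp) (by simp)]
      exact_mod_cast hweight
    · have := H.dist_parent_lt 1 x
      rw [pow_one] at this ⊢
      nlinarith
  · simpa using H.discreteMeasure_ball_le (m := m) (l := 0) (R := L) (w₀ := 1) hρ hρ1 hL hZ hLT hH
      (Nat.zero_le _) (by simp) fun a ha _ ↦ (H.weight_zero ha).le
  · obtain ⟨l, q, hlq, hRl, hrq, hq⟩ := exists_scales hρ (by linarith) hL hr hrR hRL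
    refine (H.discreteMeasure_ball_le_mul_of_le hρ hρ1 hL hZ hLT hH hlq hRl hrq hxy).trans ?_
    gcongr
    have hr0 : 0 < r := lt_of_le_of_lt (by positivity) hr
    have hNq := natCast_pow_le_rpow hρ hs hρs hq
    rw [Real.mul_rpow (by positivity) (div_nonneg (hr0.le.trans hrR) hr0.le)] at hNq
    calc (N : ℝ≥0∞) ^ (q + 2) = ENNReal.ofReal (N ^ 2 * N ^ q) := by
          rw [← pow_add, add_comm 2, ENNReal.ofReal_pow (by positivity), ENNReal.ofReal_natCast]
      _ ≤ ENNReal.ofReal (N ^ 2 * (4 * ρ⁻¹ ^ 2) ^ s * (R / r) ^ s) := by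
          rw [mul_assoc]
          gcongr

/-! ### Doubling measures -/

theorem CountingBound.exists_finite_ball_cover {Z : Type*} [PseudoMetricSpace Z] {ρ : ℝ} {N : ℕ}
    {T : ℝ≥0∞} (hZ : CountingBound Z ρ N T) (hρ : 0 < ρ) (hρ1 : ρ ≤ 1) (k : ℕ) {R : ℝ}
    (hR : 0 < R) (hRT : ENNReal.ofReal R ≤ T) (x : Z) :
    ∃ t : Set Z, t.Finite ∧ ball x R ⊆ ⋃ y ∈ t, ball y (ρ ^ k * R) := by
  induction k generalizing x R with
  | zero => exact ⟨{x}, finite_singleton x, by simp⟩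
  | succ k ih =>
    have hρR : 0 < ρ * R := by positivity
    obtain ⟨S, -, hsep, hdense⟩ :=
      exists_maximal_separated (Z := ball x R) hρR (pairwise_empty _)
    have hfin : (Subtype.val '' S).Finite := by
      refine finite_of_encard_le_coe (hZ x R hR hRT _ (by simp) ?_)
      rintro _ ⟨a, ha, rfl⟩ _ ⟨b, hb, rfl⟩ hab
      exact hsep ha hb (ne_of_apply_ne _ hab)
    choose t ht htcover using
      ih hρR (ofReal_le_of_le (mul_le_of_le_one_left hR.le hρ1) hRT)
    refine ⟨⋃ y ∈ Subtype.val '' S, t y, hfin.biUnion fun y _ ↦ ht y, fun z hz ↦ ?_⟩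
    obtain ⟨a, ha, hza⟩ := hdense ⟨z, hz⟩
    obtain ⟨y, hy, hzy⟩ := mem_iUnion₂.1 (htcover a hza)
    rw [pow_succ, mul_assoc]
    exact mem_iUnion₂.2 ⟨y, mem_iUnion₂.2 ⟨a, mem_image_of_mem _ ha, hy⟩, hzy⟩

theorem CountingBound.isCompact_closedBall {Z : Type*} [PseudoMetricSpace Z] [CompleteSpace Z]
    {ρ : ℝ} {N : ℕ} {T : ℝ≥0∞} (hZ : CountingBound Z ρ N T) (hρ : 0 < ρ) (hρ1 : ρ < 1) {r R : ℝ}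
    (hr : r < R) (hR : 0 < R) (hRT : ENNReal.ofReal R ≤ T) (x : Z) :
    IsCompact (closedBall x r) := by
  have htot : TotallyBounded (ball x R) := by
    rw [Metric.totallyBounded_iff]
    intro ε hε
    obtain ⟨k, hk⟩ := exists_pow_lt_of_lt_one (div_pos hε hR) hρ1
    obtain ⟨t, ht, hcover⟩ := hZ.exists_finite_ball_cover hρ hρ1.le k hR hRT x
    exact ⟨t, ht, hcover.trans <|
      iUnion₂_mono fun y _ ↦ ball_subset_ball ((lt_div_iff₀ hR).1 hk).le⟩
  exact isCompact_iff_totallyBounded_isComplete.2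
    ⟨htot.subset (closedBall_subset_ball hr), isClosed_closedBall.isComplete⟩

section Vague

open CompactlySupported

variable {Z : Type*} [TopologicalSpace Z] [MeasurableSpace Z]

/-- Vague convergence of measures: convergence of the integrals of all compactly supported
continuous functions. -/
def TendstoVaguely {ι : Type*} (ν : ι → Measure Z) (l : Filter ι) (μ : Measure Z) : Prop :=
  ∀ f : C_c(Z, ℝ), Tendsto (fun i ↦ ∫ z, f z ∂ν i) l (𝓝 (∫ z, f z ∂μ))

theorem norm_integral_le_of_measure_tsupport_le {ν : Measure Z} {f : C_c(Z, ℝ)} {B : ℝ}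
    (hB : ∀ z, ‖f z‖ ≤ B) (hB₀ : 0 ≤ B) {M : ℝ≥0} (hM : ν (tsupport f) ≤ M) :
    ‖∫ z, f z ∂ν‖ ≤ B * M := by
  rw [← setIntegral_eq_integral_of_forall_compl_eq_zero
    fun z hz ↦ image_eq_zero_of_notMem_tsupport hz]
  refine (norm_setIntegral_le_of_norm_le_const (hM.trans_lt ENNReal.coe_lt_top)
    fun z _ ↦ hB z).trans ?_
  gcongr
  exact ENNReal.toReal_le_of_le_ofReal M.2 (by simpa using hM)

variable [BorelSpace Z] [T2Space Z] [LocallyCompactSpace Z]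

theorem exists_tendstoVaguely (ν : ℕ → Measure Z) [∀ n, IsFiniteMeasureOnCompacts (ν n)]
    (hν : ∀ K, IsCompact K → ∃ M : ℝ≥0, ∀ᶠ n in atTop, ν n K ≤ M) :
    ∃ μ, IsFiniteMeasureOnCompacts μ ∧ TendstoVaguely ν (hyperfilter ℕ) μ := by
  have hint n (f : C_c(Z, ℝ)) : Integrable f (ν n) :=
    f.continuous.integrable_of_hasCompactSupport f.hasCompactSupport
  have hlim (f : C_c(Z, ℝ)) : ∃ l, Tendsto (fun n ↦ ∫ z, f z ∂ν n) (hyperfilter ℕ) (𝓝 l) := by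
    obtain ⟨M, hM⟩ := hν (tsupport f) f.hasCompactSupport
    obtain ⟨B, hB⟩ := f.continuous.bounded_above_of_compact_support f.hasCompactSupport
    have hmem : ∀ᶠ n in hyperfilter ℕ, ∫ z, f z ∂ν n ∈ closedBall 0 (max B 0 * M) := by
      filter_upwards [Nat.hyperfilter_le_atTop hM] with n hn
      rw [mem_closedBall_zero_iff]
      exact norm_integral_le_of_measure_tsupport_le (fun z ↦ (hB z).trans (le_max_left _ _))
        (le_max_right _ _) hn
    obtain ⟨l, -, hl⟩ := (isCompact_closedBall _ _).ultrafilter_le_nhds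
      ((hyperfilter ℕ).map fun n ↦ ∫ z, f z ∂ν n) (le_principal_iff.2 hmem)
    exact ⟨l, hl⟩
  choose Λ hΛ using hlim
  let Λ' : C_c(Z, ℝ) →ₗ[ℝ] ℝ :=
    { toFun := Λ
      map_add' f g := tendsto_nhds_unique (hΛ (f + g)) <| ((hΛ f).add (hΛ g)).congr
        fun n ↦ (integral_add (hint n f) (hint n g)).symm
      map_smul' c f := tendsto_nhds_unique (hΛ (c • f)) <| ((hΛ f).const_mul c).congr
        fun n ↦ (integral_const_mul c _).symm }
  let Λ₀ : C_c(Z, ℝ) →ₚ[ℝ] ℝ := PositiveLinearMap.mk₀ Λ' fun f hf ↦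
    ge_of_tendsto' (hΛ f) fun n ↦ integral_nonneg hf
  refine ⟨RealRMK.rieszMeasure Λ₀, inferInstance, fun f ↦ ?_⟩
  rw [RealRMK.integral_rieszMeasure]
  exact hΛ f

theorem exists_compactlySupported_integral_between {K U : Set Z} (hK : IsCompact K)
    (hU : IsOpen U) (hKU : K ⊆ U) :
    ∃ f : C_c(Z, ℝ), ∀ (ν : Measure Z) [IsFiniteMeasureOnCompacts ν],
      ν K ≤ ENNReal.ofReal (∫ z, f z ∂ν) ∧ ENNReal.ofReal (∫ z, f z ∂ν) ≤ ν U := by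
  obtain ⟨f, hfK, hf, hfU, hf01⟩ := exists_continuousMap_one_of_isCompact_subset_isOpen hK hU hKU
  refine ⟨⟨f, hf⟩, fun ν _ ↦ ?_⟩
  change ν K ≤ ENNReal.ofReal (∫ z, f z ∂ν) ∧ ENNReal.ofReal (∫ z, f z ∂ν) ≤ ν U
  rw [ofReal_integral_eq_lintegral_ofReal (f.continuous.integrable_of_hasCompactSupport hf)
    (.of_forall fun z ↦ (hf01 z).1), ← lintegral_indicator_one hK.measurableSet,
    ← lintegral_indicator_one hU.measurableSet]
  refine ⟨lintegral_mono fun z ↦ indicator_apply_le' (fun hz ↦ ?_) fun _ ↦ zero_le,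
    lintegral_mono fun z ↦ ?_⟩
  · simp [hfK hz]
  · by_cases hz : z ∈ U
    · simpa [hz] using (hf01 z).2
    · simp [image_eq_zero_of_notMem_tsupport fun h ↦ hz (hfU h)]

namespace TendstoVaguely

variable {ι : Type*} {ν : ι → Measure Z} {l : Filter ι} [l.NeBot] {μ : Measure Z}
  [∀ i, IsFiniteMeasureOnCompacts (ν i)] [IsFiniteMeasureOnCompacts μ] {K U K' U' : Set Z}
  {c : ℝ≥0∞}

theorem measure_le_mul_measure (h : TendstoVaguely ν l μ) (hK : IsCompact K) (hU : IsOpen U)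
    (hKU : K ⊆ U) (hK' : IsCompact K') (hU' : IsOpen U') (hKU' : K' ⊆ U') (hc : c ≠ ⊤)
    (hν : ∀ᶠ i in l, ν i U ≤ c * ν i K') : μ K ≤ c * μ U' := by
  obtain ⟨f, hf⟩ := exists_compactlySupported_integral_between hK hU hKU
  obtain ⟨g, hg⟩ := exists_compactlySupported_integral_between hK' hU' hKU'
  refine (hf μ).1.trans <| le_trans ?_ (mul_le_mul_right (hg μ).2 c)
  refine le_of_tendsto_of_tendsto (ENNReal.tendsto_ofReal (h f))
    (ENNReal.Tendsto.const_mul (ENNReal.tendsto_ofReal (h g)) (.inr hc)) ?_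
  filter_upwards [hν] with i hi
  exact (hf _).2.trans <| hi.trans <| mul_le_mul_right (hg _).1 c

theorem measure_le (h : TendstoVaguely ν l μ) (hK : IsCompact K) (hU : IsOpen U) (hKU : K ⊆ U)
    (hν : ∀ᶠ i in l, ν i U ≤ c) : μ K ≤ c := by
  obtain ⟨f, hf⟩ := exists_compactlySupported_integral_between hK hU hKU
  refine (hf μ).1.trans <| le_of_tendsto (ENNReal.tendsto_ofReal (h f)) ?_
  filter_upwards [hν] with i hi using (hf _).2.trans hi

theorem le_measure (h : TendstoVaguely ν l μ) (hK : IsCompact K) (hU : IsOpen U) (hKU : K ⊆ U)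
    (hν : ∀ᶠ i in l, c ≤ ν i K) : c ≤ μ U := by
  obtain ⟨f, hf⟩ := exists_compactlySupported_integral_between hK hU hKU
  refine le_trans (ge_of_tendsto (ENNReal.tendsto_ofReal (h f)) ?_) (hf μ).2
  filter_upwards [hν] with i hi using hi.trans (hf _).1

end TendstoVaguely

end Vague

section Doubling

variable {Z : Type*} [PseudoMetricSpace Z] [MeasurableSpace Z]

/-- `μ` is doubling with constant `C` and exponent `s` at the scales at most `A`. -/
def DoublingBound (μ : Measure Z) (C s : ℝ) (A : ℝ≥0∞) : Prop :=
  ∀ x y r R, 0 < r → r ≤ R → ENNReal.ofReal R ≤ A → dist x y ≤ R →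
    μ (ball x R) ≤ ENNReal.ofReal (C * (R / r) ^ s) * μ (ball y r)

theorem DoublingBound.measure_ball_pos {μ : Measure Z} {C s : ℝ} {A : ℝ≥0∞}
    (h : DoublingBound μ C s A) {x y : Z} {r R : ℝ} (hr : 0 < r) (hrR : r ≤ R)
    (hR : ENNReal.ofReal R ≤ A) (hxy : dist x y ≤ R) (hpos : 0 < μ (ball x R)) :
    0 < μ (ball y r) :=
  pos_iff_ne_zero.2 fun h₀ ↦ (h x y r R hr hrR hR hxy).not_gt (by rwa [h₀, mul_zero])

theorem exists_measure_le_natCast_mul_of_isCompact {L : ℝ} (hL : 0 < L) {K : Set Z}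
    (hK : IsCompact K) :
    ∃ k : ℕ, ∀ (ν : Measure Z) (M : ℝ≥0∞), (∀ x, ν (ball x L) ≤ M) → ν K ≤ k * M := by
  obtain ⟨t, -, ht, hcover⟩ := hK.finite_cover_balls hL
  refine ⟨ht.toFinset.card, fun ν M hM ↦ ?_⟩
  calc ν K ≤ ν (⋃ x ∈ ht.toFinset, ball x L) := measure_mono (by simpa using hcover)
    _ ≤ ∑ x ∈ ht.toFinset, ν (ball x L) := measure_biUnion_finset_le _ _
    _ ≤ ∑ _x ∈ ht.toFinset, M := Finset.sum_le_sum fun x _ ↦ hM x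
    _ = ht.toFinset.card * M := by simp

theorem isFiniteMeasureOnCompacts_of_measure_ball_le {L : ℝ} (hL : 0 < L) {ν : Measure Z}
    {M : ℝ≥0} (hν : ∀ x, ν (ball x L) ≤ M) : IsFiniteMeasureOnCompacts ν where
  lt_top_of_isCompact _ hK :=
    let ⟨k, hk⟩ := exists_measure_le_natCast_mul_of_isCompact hL hK
    (hk ν M hν).trans_lt (ENNReal.mul_lt_top (ENNReal.natCast_lt_top k) ENNReal.coe_lt_top)

end Doubling

theorem locallyCompactSpace_of_isCompact_closedBall {Z : Type*} [MetricSpace Z] {r : ℝ}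
    (hr : 0 < r) (hcompact : ∀ x : Z, IsCompact (closedBall x r)) : LocallyCompactSpace Z :=
  have : WeaklyLocallyCompactSpace Z :=
    ⟨fun x ↦ ⟨closedBall x r, hcompact x, closedBall_mem_nhds x hr⟩⟩
  inferInstance

theorem TendstoVaguely.doublingBound {Z : Type*} [MetricSpace Z] [MeasurableSpace Z] [BorelSpace Z]
    [LocallyCompactSpace Z] {ι : Type*} {l : Filter ι} [l.NeBot] {ν : ι → Measure Z}
    [∀ i, IsFiniteMeasureOnCompacts (ν i)] {μ : Measure Z} [IsFiniteMeasureOnCompacts μ]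
    (h : TendstoVaguely ν l μ) {A : ℝ≥0∞}
    (hcompact : ∀ (x : Z) r, ENNReal.ofReal r ≤ A → IsCompact (closedBall x r)) {C s : ℝ}
    (hν : ∀ x y r R, 0 < r → r ≤ R → ENNReal.ofReal R ≤ A → dist x y ≤ R →
      ∀ᶠ i in l, ν i (ball x R) ≤ ENNReal.ofReal (C * (R / r) ^ s) * ν i (ball y r)) :
    ∀ B, 2 * B ≤ A → DoublingBound μ (C * 4 ^ s) s B := by
  intro B hB x y r R hr hrR hRB hxy
  have hR : 0 < R := hr.trans_le hrR
  have hRA : ENNReal.ofReal (2 * R) ≤ A := by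
    rw [ENNReal.ofReal_mul zero_le_two, ENNReal.ofReal_ofNat]
    exact (mul_le_mul_right hRB 2).trans hB
  calc μ (ball x R) ≤ μ (closedBall x R) := measure_mono ball_subset_closedBall
    _ ≤ ENNReal.ofReal (C * (2 * R / (r / 2)) ^ s) * μ (ball y r) := by
      refine h.measure_le_mul_measure (hcompact x R (ofReal_le_of_le (by linarith : R ≤ 2 * R) hRA))
        isOpen_ball (closedBall_subset_ball (by linarith : R < 2 * R))
        (hcompact y (r / 2) (ofReal_le_of_le (by linarith : r / 2 ≤ 2 * R) hRA)) isOpen_ball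
        (closedBall_subset_ball (half_lt_self hr)) ENNReal.ofReal_ne_top ?_
      filter_upwards [hν x y (r / 2) (2 * R) (by positivity) (by linarith) hRA (by linarith)]
        with i hi
      exact hi.trans (mul_le_mul_right (measure_mono ball_subset_closedBall) _)
    _ = ENNReal.ofReal (C * 4 ^ s * (R / r) ^ s) * μ (ball y r) := by
      rw [show 2 * R / (r / 2) = 4 * (R / r) by field_simp; norm_num,
        Real.mul_rpow (by norm_num) (by positivity), mul_assoc]

theorem eventually_mul_pow_succ_lt {ρ : ℝ} (hρ : 0 ≤ ρ) (hρ1 : ρ < 1) (c : ℝ) {r : ℝ}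
    (hr : 0 < r) : ∀ᶠ n : ℕ in atTop, c * ρ ^ (n + 1) < r := by
  have hlim := (((tendsto_pow_atTop_nhds_zero_of_lt_one hρ hρ1).comp
    (tendsto_add_atTop_nat 1)).const_mul c)
  exact hlim.eventually (gt_mem_nhds (by simpa using hr))

namespace CountingBound

variable {Z : Type*} [MetricSpace Z] [MeasurableSpace Z] [BorelSpace Z]
  {ρ s : ℝ} {N : ℕ}

theorem exists_normalized_discrete_measure (hZ : CountingBound Z ρ N ⊤) (hρ : 0 < ρ)
    (hρ1 : ρ ≤ 1 / 20) (hN : 1 ≤ N) (hs : 0 ≤ s) (hρs : ρ⁻¹ ^ s = N) (z₀ : Z) (n : ℕ) :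
    ∃ ν : Measure Z, IsFiniteMeasureOnCompacts ν ∧ ν (ball z₀ 1) = 1 ∧
      ∀ x y r R, 4 * ρ ^ (n + 1) < r → r ≤ R → R ≤ ρ⁻¹ ^ (n + 1) → dist x y ≤ R →
        ν (ball x R) ≤
          ENNReal.ofReal (N ^ 2 * (4 * ρ⁻¹ ^ 2) ^ s * (R / r) ^ s) * ν (ball y r) := by
  have hL : 0 < ρ⁻¹ ^ (n + 1) := by positivity
  have hL₁ : 1 ≤ ρ⁻¹ ^ (n + 1) := one_le_pow₀ ((one_le_inv₀ hρ).2 (by linarith))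
  have hscale : ρ ^ (2 * (n + 1)) * ρ⁻¹ ^ (n + 1) = ρ ^ (n + 1) := by
    rw [two_mul, pow_add, mul_assoc, ← mul_pow, mul_inv_cancel₀ hρ.ne', one_pow, mul_one]
  have hscale₁ : 4 * ρ ^ (n + 1) < 1 := by
    have := pow_le_of_le_one hρ.le (by linarith : ρ ≤ 1) (Nat.add_one_ne_zero n)
    linarith
  obtain ⟨ν, hνL, hν⟩ := exists_discrete_measure hρ hρ1 hZ hN hs hρs hL le_top
    (show 1 ≤ 2 * (n + 1) by lia)
  rw [hscale] at hν
  have hpos : ν (ball z₀ 1) ≠ 0 := by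
    intro h₀
    have h := (hνL z₀).1.trans (hν z₀ z₀ 1 _ hscale₁ hL₁ le_rfl
      (by rw [dist_self]; exact hL.le))
    simp [h₀] at h
  have hfin : ν (ball z₀ 1) ≠ ⊤ := ne_top_of_le_ne_top (ENNReal.natCast_ne_top N) <|
    (measure_mono (ball_subset_ball hL₁)).trans (hνL z₀).2
  have : IsFiniteMeasureOnCompacts ν :=
    isFiniteMeasureOnCompacts_of_measure_ball_le hL (M := N) (by simpa using fun x ↦ (hνL x).2)
  refine ⟨(ν (ball z₀ 1))⁻¹ • ν, .smul ν (ENNReal.inv_ne_top.2 hpos), ?_,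
    fun x y r R hr hrR hR hxy ↦ ?_⟩
  · simpa using ENNReal.inv_mul_cancel hpos hfin
  · simp only [Measure.smul_apply, smul_eq_mul]
    rw [mul_left_comm]
    exact mul_le_mul_right (hν x y r R hr hrR hR hxy) _

theorem exists_normalized_discrete_measures (hZ : CountingBound Z ρ N ⊤) (hρ : 0 < ρ)
    (hρ1 : ρ ≤ 1 / 20) (hN : 1 ≤ N) (hs : 0 ≤ s) (hρs : ρ⁻¹ ^ s = N) (z₀ : Z) :
    ∃ ν : ℕ → Measure Z, (∀ n, IsFiniteMeasureOnCompacts (ν n)) ∧ (∀ n, ν n (ball z₀ 1) = 1) ∧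
      ∀ x y r R, 0 < r → r ≤ R → dist x y ≤ R → ∀ᶠ n in atTop,
        ν n (ball x R) ≤
          ENNReal.ofReal (N ^ 2 * (4 * ρ⁻¹ ^ 2) ^ s * (R / r) ^ s) * ν n (ball y r) := by
  choose ν hνfin hν₁ hν using hZ.exists_normalized_discrete_measure hρ hρ1 hN hs hρs z₀
  have hlarge : Tendsto (fun n : ℕ ↦ ρ⁻¹ ^ (n + 1)) atTop atTop :=
    (tendsto_pow_atTop_atTop_of_one_lt ((one_lt_inv₀ hρ).2 (by linarith))).comp
      (tendsto_add_atTop_nat 1)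
  refine ⟨ν, hνfin, hν₁, fun x y r R hr hrR hxy ↦ ?_⟩
  filter_upwards [eventually_mul_pow_succ_lt hρ.le (by linarith) 4 hr,
    hlarge.eventually_ge_atTop R] with n hn hR using hν n x y r R hn hrR hR hxy

variable [CompleteSpace Z]

theorem exists_doublingBound_of_le {T : ℝ≥0∞} (hZ : CountingBound Z ρ N T) (hρ : 0 < ρ)
    (hρ1 : ρ ≤ 1 / 20) (hN : 1 ≤ N) (hs : 0 ≤ s) (hρs : ρ⁻¹ ^ s = N) {L : ℝ} (hL : 0 < L)
    (hLT : ENNReal.ofReal (L / ρ) ≤ T) :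
    ∃ (μ : Measure Z) (C a b : ℝ), 0 < C ∧ 0 < a ∧ DoublingBound μ C s (ENNReal.ofReal (L / 2)) ∧
      ∀ x, ENNReal.ofReal a ≤ μ (ball x (L / 2)) ∧ μ (ball x (L / 2)) ≤ ENNReal.ofReal b := by
  have hN₀ : (0 : ℝ) < N := by positivity
  choose ν hνL hν using fun n : ℕ ↦
    exists_discrete_measure hρ hρ1 hZ hN hs hρs hL hLT (Nat.le_add_left 1 n)
  set C₀ : ℝ := N ^ 2 * (4 * ρ⁻¹ ^ 2) ^ s
  have : 0 < C₀ := by positivity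
  have hcompact (x : Z) (r : ℝ) (hr : ENNReal.ofReal r ≤ ENNReal.ofReal L) :
      IsCompact (closedBall x r) :=
    hZ.isCompact_closedBall hρ (by linarith) (((ENNReal.ofReal_le_ofReal_iff hL.le).1 hr).trans_lt
      ((lt_div_iff₀ hρ).2 (by nlinarith))) (div_pos hL hρ) hLT x
  have := locallyCompactSpace_of_isCompact_closedBall hL fun x : Z ↦ hcompact x L le_rfl
  have (n : ℕ) : IsFiniteMeasureOnCompacts (ν n) :=
    isFiniteMeasureOnCompacts_of_measure_ball_le hL (M := N) (by simpa using fun x ↦ (hνL n x).2)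
  have hdoubling (x y : Z) (r R : ℝ) (hr : 0 < r) (hrR : r ≤ R)
      (hR : ENNReal.ofReal R ≤ ENNReal.ofReal L) (hxy : dist x y ≤ R) : ∀ᶠ n in hyperfilter ℕ,
        ν n (ball x R) ≤ ENNReal.ofReal (C₀ * (R / r) ^ s) * ν n (ball y r) := by
    filter_upwards [Nat.hyperfilter_le_atTop
      (eventually_mul_pow_succ_lt hρ.le (by linarith) (4 * L) hr)] with n hn
    exact hν n x y r R (by linarith) hrR ((ENNReal.ofReal_le_ofReal_iff hL.le).1 hR) hxy
  obtain ⟨μ, hμ, hlim⟩ := exists_tendstoVaguely ν fun K hK ↦ by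
    obtain ⟨k, hk⟩ := exists_measure_le_natCast_mul_of_isCompact hL hK
    exact ⟨k * N, .of_forall fun n ↦ by simpa using hk (ν n) N fun x ↦ (hνL n x).2⟩
  have hL₂ : L / 2 < L := half_lt_self hL
  refine ⟨μ, C₀ * 4 ^ s, (C₀ * 4 ^ s)⁻¹ * (N : ℝ)⁻¹, N, by positivity, by positivity,
    hlim.doublingBound hcompact hdoubling _ ?_, fun x ↦ ⟨?_, ?_⟩⟩
  · rw [← ENNReal.ofReal_ofNat, ← ENNReal.ofReal_mul zero_le_two, mul_div_cancel₀ L two_ne_zero]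
  · refine hlim.le_measure (hcompact x (L / 4) (ENNReal.ofReal_le_ofReal (by linarith)))
      isOpen_ball (closedBall_subset_ball (by linarith)) ?_
    filter_upwards [hdoubling x x (L / 4) L (by linarith) (by linarith) le_rfl (by simp [hL.le])]
      with n hn
    rw [show L / (L / 4) = 4 by field_simp] at hn
    rw [ENNReal.ofReal_mul (by positivity), ENNReal.ofReal_inv_of_pos (by positivity),
      ENNReal.ofReal_inv_of_pos hN₀, ENNReal.ofReal_natCast,
      ENNReal.inv_mul_le_iff (by rw [ENNReal.ofReal_ne_zero_iff]; positivity) ENNReal.ofReal_ne_top]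
    exact (hνL n x).1.trans (hn.trans (mul_le_mul_right (measure_mono ball_subset_closedBall) _))
  · rw [ENNReal.ofReal_natCast]
    exact (measure_mono ball_subset_closedBall).trans <|
      hlim.measure_le (hcompact x (L / 2) (ENNReal.ofReal_le_ofReal hL₂.le)) isOpen_ball
        (closedBall_subset_ball hL₂) (.of_forall fun n ↦ (hνL n x).2)

theorem exists_doublingBound_top [Nonempty Z] (hZ : CountingBound Z ρ N ⊤) (hρ : 0 < ρ)
    (hρ1 : ρ ≤ 1 / 20) (hN : 1 ≤ N) (hs : 0 ≤ s) (hρs : ρ⁻¹ ^ s = N) :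
    ∃ (μ : Measure Z) (C : ℝ), 0 < C ∧ DoublingBound μ C s ⊤ ∧
      ∀ x r, 0 < r → 0 < μ (ball x r) ∧ μ (ball x r) < ⊤ := by
  obtain ⟨z₀⟩ := ‹Nonempty Z›
  obtain ⟨ν, hνfin, hν₁, hdoubling⟩ :=
    hZ.exists_normalized_discrete_measures hρ hρ1 hN hs hρs z₀
  set C₀ : ℝ := N ^ 2 * (4 * ρ⁻¹ ^ 2) ^ s
  have : 0 < C₀ := by positivity
  have hcompact (x : Z) (r : ℝ) : IsCompact (closedBall x r) :=
    hZ.isCompact_closedBall hρ (by linarith) ((le_abs_self r).trans_lt (lt_add_one _))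
      (by positivity) le_top x
  have := locallyCompactSpace_of_isCompact_closedBall one_pos fun x : Z ↦ hcompact x 1
  obtain ⟨μ, hμ, hlim⟩ := exists_tendstoVaguely ν fun K hK ↦ by
    obtain ⟨R, hR⟩ := hK.isBounded.subset_ball z₀
    refine ⟨(C₀ * (max R 1 / 1) ^ s).toNNReal, ?_⟩
    filter_upwards [hdoubling z₀ z₀ 1 (max R 1) one_pos (le_max_right _ _) (by simp)] with n hn
    rw [hν₁, mul_one] at hn
    exact (measure_mono (hR.trans (ball_subset_ball (le_max_left _ _)))).trans hn
  have hμC : DoublingBound μ (C₀ * 4 ^ s) s ⊤ :=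
    hlim.doublingBound (fun x r _ ↦ hcompact x r) (fun x y r R hr hrR _ hxy ↦
      Nat.hyperfilter_le_atTop (hdoubling x y r R hr hrR hxy)) ⊤ le_top
  refine ⟨μ, C₀ * 4 ^ s, by positivity, hμC, fun x r hr ↦ ⟨?_, ?_⟩⟩
  · have hpos : 1 ≤ μ (ball z₀ 2) := hlim.le_measure (hcompact z₀ 1) isOpen_ball
      (closedBall_subset_ball one_lt_two)
      (.of_forall fun n ↦ (hν₁ n).ge.trans (measure_mono ball_subset_closedBall))
    refine hμC.measure_ball_pos (x := z₀) (R := max r (max 2 (dist z₀ x))) hr (le_max_left _ _)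
      le_top (by simp) (one_pos.trans_le (hpos.trans (measure_mono (ball_subset_ball ?_))))
    simp
  · exact (measure_mono ball_subset_closedBall).trans_lt (hcompact x r).measure_lt_top

end CountingBound

/-! ### Deforming a metric by a gauge -/

section Gauge

variable {Z : Type u} [MetricSpace Z] {φ : Z → ℝ → ℝ} {C c α : ℝ} {T : ℝ≥0∞} {x y z : Z}
  {r R : ℝ}

/-- A gauge assigns to each ball `B(x, R)` a size `φ x R`, which is to become comparable to its
diameter after a change of metric. The conditions concern the scales at most `T`. -/
structure IsGauge (φ : Z → ℝ → ℝ) (C : ℝ) (T : ℝ≥0∞) : Prop where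
  pos : ∀ x r, 0 < r → ENNReal.ofReal r ≤ T → 0 < φ x r
  mono : ∀ x r R, 0 < r → r ≤ R → ENNReal.ofReal R ≤ T → φ x r ≤ φ x R
  doubling : ∀ x y r R, 0 < r → r ≤ R → ENNReal.ofReal R ≤ T → dist x y ≤ R →
    φ x R ≤ C * (R / r) * φ y r

/-- Power decay, with exponent `α`, of the size of balls as their radii shrink, at the scales at
most `T`. -/
def ReverseDoubling (φ : Z → ℝ → ℝ) (c α : ℝ) (T : ℝ≥0∞) : Prop :=
  ∀ x r R, 0 < r → r ≤ R → ENNReal.ofReal R ≤ T → φ x r ≤ c * (r / R) ^ α * φ x R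

namespace IsGauge

theorem le_mul (hφ : IsGauge φ C ⊤) (hr : 0 < r) (hxy : dist x y ≤ r) : φ x r ≤ C * φ y r := by
  simpa [hr.ne'] using hφ.doubling x y r r hr le_rfl le_top hxy

theorem one_le (hφ : IsGauge φ C ⊤) (x : Z) : 1 ≤ C :=
  le_of_mul_le_mul_right (by simpa using hφ.le_mul one_pos (by simp : dist x x ≤ 1))
    (hφ.pos x 1 one_pos le_top)

end IsGauge

theorem abs_min_sub_min_le_min {a b d : ℝ} (ha : 0 ≤ a) (hb : 0 ≤ b) (hR : 0 ≤ R)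
    (hd : |a - b| ≤ d) : |min a R - min b R| ≤ min d R := by
  refine le_min ?_ (abs_sub_le_iff.2 ⟨?_, ?_⟩)
  · simpa using (abs_min_sub_min_le_max a R b R).trans (by simpa using hd)
  · linarith [min_le_right a R, le_min hb hR]
  · linarith [min_le_right b R, le_min ha hR]

/-- The pseudodistance seen from the ball `B(z, R)`: the variation of the distance to `z`,
truncated at `R` and rescaled so that the ball has radius `φ z R`. -/
noncomputable def ballDist (φ : Z → ℝ → ℝ) (z : Z) (R : ℝ) (x y : Z) : ℝ :=
  φ z R / R * |min (dist z x) R - min (dist z y) R|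

/-- The distance induced by a gauge, the largest of the pseudodistances seen from the balls. -/
noncomputable def gaugeDist (φ : Z → ℝ → ℝ) (x y : Z) : ℝ :=
  ⨆ p : Z × Ioi (0 : ℝ), ballDist φ p.1 p.2 x y

theorem ballDist_self : ballDist φ z R x x = 0 := by
  simp [ballDist]

theorem ballDist_comm : ballDist φ z R x y = ballDist φ z R y x := by
  rw [ballDist, ballDist, abs_sub_comm]

theorem gaugeDist_comm (x y : Z) : gaugeDist φ x y = gaugeDist φ y x :=
  iSup_congr fun _ ↦ ballDist_comm

theorem gaugeDist_self (x : Z) : gaugeDist φ x x = 0 := by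
  simp [gaugeDist, ballDist_self]

namespace IsGauge

theorem ballDist_triangle (hφ : IsGauge φ C ⊤) (hR : 0 < R) (x y w : Z) :
    ballDist φ z R x w ≤ ballDist φ z R x y + ballDist φ z R y w := by
  have := hφ.pos z R hR le_top
  rw [ballDist, ballDist, ballDist, ← mul_add]
  gcongr
  exact abs_sub_le _ _ _

theorem ballDist_le_apply (hφ : IsGauge φ C ⊤) (hR : 0 < R) (x y : Z) :
    ballDist φ z R x y ≤ φ z R := by
  have := hφ.pos z R hR le_top
  calc φ z R / R * |min (dist z x) R - min (dist z y) R| ≤ φ z R / R * R := by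
        gcongr
        exact (abs_min_sub_min_le_min dist_nonneg dist_nonneg hR.le le_rfl).trans
          (min_le_right _ _)
    _ = φ z R := by field_simp

theorem ballDist_le_of_dist_lt (hφ : IsGauge φ C ⊤) (hxy : x ≠ y) (hR : 0 < R)
    (hz : dist z x < R) : ballDist φ z R x y ≤ C * φ x (dist x y) := by
  have hd : 0 < dist x y := dist_pos.2 hxy
  have hpos := hφ.pos z R hR le_top
  rcases le_total R (dist x y) with hRd | hdR
  · calc ballDist φ z R x y ≤ φ z R := hφ.ballDist_le_apply hR x y
      _ ≤ φ z (dist x y) := hφ.mono z R _ hR hRd le_top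
      _ ≤ C * φ x (dist x y) := hφ.le_mul hd (hz.le.trans hRd)
  · calc φ z R / R * |min (dist z x) R - min (dist z y) R| ≤ φ z R / R * dist x y := by
          gcongr
          refine (abs_min_sub_min_le_min dist_nonneg dist_nonneg hR.le ?_).trans (min_le_left _ _)
          rw [dist_comm z x, dist_comm z y]
          exact abs_dist_sub_le x y z
      _ ≤ C * (R / dist x y) * φ x (dist x y) / R * dist x y := by
          gcongr
          exact hφ.doubling z x _ R hd hdR le_top hz.le
      _ = C * φ x (dist x y) := by field_simp

theorem ballDist_le (hφ : IsGauge φ C ⊤) (hxy : x ≠ y) (hR : 0 < R) :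
    ballDist φ z R x y ≤ C ^ 2 * φ x (dist x y) := by
  have hd : 0 < dist x y := dist_pos.2 hxy
  have hpos := hφ.pos x _ hd le_top
  have hC := hφ.one_le x
  rcases lt_or_ge (dist z x) R with hx | hx
  · refine (hφ.ballDist_le_of_dist_lt hxy hR hx).trans ?_
    gcongr
    exact le_self_pow₀ hC two_ne_zero
  rcases lt_or_ge (dist z y) R with hy | hy
  · calc ballDist φ z R x y ≤ C * φ y (dist x y) := by
          rw [ballDist_comm, dist_comm x y]
          exact hφ.ballDist_le_of_dist_lt hxy.symm hR hy
      _ ≤ C * (C * φ x (dist x y)) := by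
          gcongr
          exact hφ.le_mul hd (dist_comm x y).ge
      _ = C ^ 2 * φ x (dist x y) := by ring
  · rw [ballDist, min_eq_right hx, min_eq_right hy, sub_self, abs_zero, mul_zero]
    positivity

theorem bddAbove_ballDist (hφ : IsGauge φ C ⊤) (x y : Z) :
    BddAbove (range fun p : Z × Ioi (0 : ℝ) ↦ ballDist φ p.1 p.2 x y) := by
  rcases eq_or_ne x y with rfl | hxy
  · exact ⟨0, forall_mem_range.2 fun _ ↦ ballDist_self.le⟩
  · exact ⟨_, forall_mem_range.2 fun p ↦ hφ.ballDist_le hxy p.2.2⟩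

theorem gaugeDist_le (hφ : IsGauge φ C ⊤) (hxy : x ≠ y) :
    gaugeDist φ x y ≤ C ^ 2 * φ x (dist x y) :=
  have : Nonempty (Z × Ioi (0 : ℝ)) := ⟨x, 1, mem_Ioi.2 one_pos⟩
  ciSup_le fun p ↦ hφ.ballDist_le hxy p.2.2

theorem apply_dist_le_gaugeDist (hφ : IsGauge φ C ⊤) (hxy : x ≠ y) :
    φ x (dist x y) ≤ gaugeDist φ x y := by
  have hd : 0 < dist x y := dist_pos.2 hxy
  refine le_of_eq_of_le ?_ (le_ciSup (hφ.bddAbove_ballDist x y) (x, ⟨dist x y, hd⟩))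
  simp [ballDist, hd.le, abs_of_pos hd, hd.ne']

theorem ofReal_gaugeDist_le (hφ : IsGauge φ C ⊤) {E : ℝ≥0∞}
    (hE : ∀ z R, 0 < R → ENNReal.ofReal (φ z R) ≤ E) (x y : Z) :
    ENNReal.ofReal (gaugeDist φ x y) ≤ E := by
  have : Nonempty (Z × Ioi (0 : ℝ)) := ⟨x, 1, mem_Ioi.2 one_pos⟩
  rcases eq_or_ne E ⊤ with rfl | hE'
  · exact le_top
  refine (ENNReal.ofReal_le_iff_le_toReal hE').2 <| ciSup_le fun p ↦ ?_
  exact (hφ.ballDist_le_apply p.2.2 x y).trans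
    ((ENNReal.ofReal_le_iff_le_toReal hE').1 (hE p.1 p.2 p.2.2))

theorem gaugeDist_triangle (hφ : IsGauge φ C ⊤) (x y w : Z) :
    gaugeDist φ x w ≤ gaugeDist φ x y + gaugeDist φ y w :=
  have : Nonempty (Z × Ioi (0 : ℝ)) := ⟨x, 1, mem_Ioi.2 one_pos⟩
  ciSup_le fun p ↦ (hφ.ballDist_triangle p.2.2 x y w).trans <|
    add_le_add (le_ciSup (hφ.bddAbove_ballDist x y) p) (le_ciSup (hφ.bddAbove_ballDist y w) p)

theorem eq_of_gaugeDist_eq_zero (hφ : IsGauge φ C ⊤) (h : gaugeDist φ x y = 0) : x = y := by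
  by_contra hxy
  exact ((hφ.pos x _ (dist_pos.2 hxy) le_top).trans_le (hφ.apply_dist_le_gaugeDist hxy)).ne' h

theorem exists_metricSpace (hφ : IsGauge φ C ⊤) :
    ∃ (W : Type u) (_ : MetricSpace W) (e : Z ≃ W), ∀ x y, dist (e x) (e y) = gaugeDist φ x y :=
  ⟨Z,
    { dist := gaugeDist φ
      dist_self := gaugeDist_self
      dist_comm := gaugeDist_comm
      dist_triangle := hφ.gaugeDist_triangle
      eq_of_dist_eq_zero := hφ.eq_of_gaugeDist_eq_zero },
    Equiv.refl Z, fun _ _ ↦ rfl⟩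

theorem apply_le_mul_rpow_add (hφ : IsGauge φ C ⊤) (hc : 0 < c) (hrev : ReverseDoubling φ c α T)
    {t : ℝ} (hr : 0 < r) (hR : 0 < R) (hRT : ENNReal.ofReal R ≤ T) (ht : 0 ≤ t) (hrR : r ≤ t * R)
    (hα : 0 < α) : φ x r ≤ (C + c) * (t ^ α + t) * φ x R := by
  have hpos := hφ.pos x R hR le_top
  have hC := hφ.one_le x
  have htR : r / R ≤ t := (div_le_iff₀ hR).2 hrR
  have htα : 0 ≤ t ^ α := Real.rpow_nonneg ht α
  rcases le_total r R with h | h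
  · calc φ x r ≤ c * (r / R) ^ α * φ x R := hrev x r R hr h hRT
      _ ≤ c * t ^ α * φ x R := by gcongr
      _ ≤ (C + c) * (t ^ α + t) * φ x R := by
        gcongr <;> linarith
  · calc φ x r ≤ C * (r / R) * φ x R :=
          hφ.doubling x x R r hR h le_top (by simpa using hr.le)
      _ ≤ C * t * φ x R := by gcongr
      _ ≤ (C + c) * (t ^ α + t) * φ x R := by
        gcongr <;> linarith

theorem isQuasisymmetric (hφ : IsGauge φ C ⊤) (hc : 0 < c) (hα : 0 < α)
    (hrev : ReverseDoubling φ c α (ediam (univ : Set Z))) {W : Type*} [MetricSpace W] {e : Z → W}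
    (he : ∀ x y, dist (e x) (e y) = gaugeDist φ x y) : IsQuasisymmetric e := by
  rcases isEmpty_or_nonempty Z with hZ | ⟨⟨x₀⟩⟩
  · exact ⟨Homeomorph.refl _, fun x ↦ isEmptyElim x⟩
  have hC := hφ.one_le x₀
  obtain ⟨η, hη⟩ := exists_homeomorph_rpow_add (C := C ^ 2 * (C + c)) (by positivity) hα
  refine ⟨η, .of_dist_le fun x y z t h ↦ ?_⟩
  rcases eq_or_ne x y with rfl | hxy
  · rw [dist_self]
    positivity
  have hxz : x ≠ z := by
    rintro rfl
    exact hxy (dist_le_zero.1 (by simpa using h))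
  rw [he, he, hη]
  calc gaugeDist φ x y ≤ C ^ 2 * φ x (dist x y) := hφ.gaugeDist_le hxy
    _ ≤ C ^ 2 * ((C + c) * ((t : ℝ) ^ α + t) * φ x (dist x z)) := by
      gcongr
      exact hφ.apply_le_mul_rpow_add hc hrev (dist_pos.2 hxy) (dist_pos.2 hxz)
        (ofReal_dist_le_ediam_univ x z) t.2 h hα
    _ ≤ C ^ 2 * ((C + c) * ((t : ℝ) ^ α + t) * gaugeDist φ x z) := by
      gcongr
      exact hφ.apply_dist_le_gaugeDist hxz
    _ = C ^ 2 * (C + c) * ((t : ℝ) ^ α + t) * gaugeDist φ x z := by ring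

end IsGauge

end Gauge

section

variable {Z : Type u} [MetricSpace Z] {φ : Z → ℝ → ℝ} {C D c α s : ℝ} {E T : ℝ≥0∞} {x : Z} {r : ℝ}

theorem ReverseDoubling.tendsto_zero (hφ : IsGauge φ C ⊤) (hrev : ReverseDoubling φ c α T)
    (hα : 0 < α) {R : ℝ} (hR : 0 < R) (hRT : ENNReal.ofReal R ≤ T) (x : Z) :
    Tendsto (φ x) (𝓝[>] 0) (𝓝 0) := by
  have hcont : Continuous fun r : ℝ ↦ c * (r / R) ^ α * φ x R := by
    have := hα.le
    fun_prop (disch := assumption)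
  refine tendsto_of_tendsto_of_tendsto_of_le_of_le' tendsto_const_nhds
    (tendsto_nhdsWithin_of_tendsto_nhds (by simpa [hα.ne'] using hcont.tendsto 0)) ?_ ?_
  · filter_upwards [self_mem_nhdsWithin] with r hr using (hφ.pos x r hr le_top).le
  · filter_upwards [Ioc_mem_nhdsGT hR] with r hr using hrev x r R hr.1 hr.2 hRT

theorem exists_lt_le_two_mul {f : ℝ → ℝ} (hf : Tendsto f (𝓝[>] 0) (𝓝 0)) {R : ℝ} (hr : 0 < r)
    (hR : 0 < R) (hrR : r ≤ f R) : ∃ S, 0 < S ∧ f S < r ∧ r ≤ f (2 * S) := by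
  have hlim : Tendsto (fun n : ℕ ↦ R * (1 / 2 : ℝ) ^ n) atTop (𝓝[>] 0) :=
    tendsto_nhdsWithin_iff.2
      ⟨by simpa using (tendsto_pow_atTop_nhds_zero_of_lt_one (r := (1 / 2 : ℝ)) (by norm_num)
        (by norm_num)).const_mul R, .of_forall fun n ↦ mem_Ioi.2 (by positivity)⟩
  have hex : ∃ n : ℕ, f (R * (1 / 2) ^ n) < r :=
    (((hf.comp hlim).eventually_lt_const hr).exists)
  classical
  obtain ⟨n, hn⟩ : ∃ n, Nat.find hex = n + 1 :=
    Nat.exists_eq_succ_of_ne_zero fun h ↦ (Nat.find_spec hex).not_ge (by rwa [h, pow_zero, mul_one])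
  refine ⟨R * (1 / 2) ^ (n + 1), by positivity, hn ▸ Nat.find_spec hex, ?_⟩
  have hmin := not_lt.1 (Nat.find_min hex (m := n) (by omega))
  rwa [show 2 * (R * (1 / 2) ^ (n + 1)) = R * (1 / 2 : ℝ) ^ n by ring]

/-- The measure of a ball is comparable to the `s`-th power of its gauge. The gauge takes its
values up to the height `E`, beyond which nothing is required. -/
structure IsRegularGauge [MeasurableSpace Z] (φ : Z → ℝ → ℝ) (μ : Measure Z) (s C : ℝ)
    (E : ℝ≥0∞) : Prop where
  ofReal_le : ∀ x R, 0 < R → ENNReal.ofReal (φ x R) ≤ E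
  exists_le : ∀ x r, 0 < r → ENNReal.ofReal r ≤ E → ∃ R, 0 < R ∧ r ≤ φ x R
  le_measure : ∀ x R, 0 < R → ENNReal.ofReal (φ x R ^ s) ≤ μ (ball x R)
  measure_le : ∀ x R, 0 < R → ENNReal.ofReal (φ x R) < E →
    μ (ball x (2 * R)) ≤ ENNReal.ofReal (C * φ x R ^ s)

namespace IsRegularGauge

variable [MeasurableSpace Z] {μ : Measure Z}

theorem measure_gaugeDist_lt_le (h : IsRegularGauge φ μ s D E) (hφ : IsGauge φ C ⊤)
    (h0 : Tendsto (φ x) (𝓝[>] 0) (𝓝 0)) (hD : 0 ≤ D) (hs : 0 ≤ s) (hr : 0 < r)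
    (hrE : ENNReal.ofReal r ≤ E) :
    μ {y | gaugeDist φ x y < r} ≤ ENNReal.ofReal (D * r ^ s) := by
  obtain ⟨R₁, hR₁, hrR₁⟩ := h.exists_le x r hr hrE
  obtain ⟨R, hR, hRr, hrR⟩ := exists_lt_le_two_mul h0 hr hR₁ hrR₁
  have hpos := hφ.pos x R hR le_top
  have hsub : {y | gaugeDist φ x y < r} ⊆ ball x (2 * R) := by
    intro y hy
    by_contra hyR
    have hle : 2 * R ≤ dist x y := by rwa [mem_ball', not_lt] at hyR
    refine (show gaugeDist φ x y < r from hy).not_ge ?_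
    calc r ≤ φ x (2 * R) := hrR
      _ ≤ φ x (dist x y) := hφ.mono x _ _ (by positivity) hle le_top
      _ ≤ gaugeDist φ x y := hφ.apply_dist_le_gaugeDist (dist_pos.1 (by linarith))
  calc μ {y | gaugeDist φ x y < r} ≤ μ (ball x (2 * R)) := measure_mono hsub
    _ ≤ ENNReal.ofReal (D * φ x R ^ s) :=
      h.measure_le x R hR (((ENNReal.ofReal_lt_ofReal_iff hr).2 hRr).trans_le hrE)
    _ ≤ ENNReal.ofReal (D * r ^ s) := by gcongr

theorem le_measure_gaugeDist_lt (h : IsRegularGauge φ μ s D E) (hφ : IsGauge φ C ⊤)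
    (h0 : Tendsto (φ x) (𝓝[>] 0) (𝓝 0)) (hs : 0 ≤ s) (hr : 0 < r)
    (hrE : ENNReal.ofReal r ≤ E) :
    ENNReal.ofReal ((r / (2 * C ^ 3)) ^ s) ≤ μ {y | gaugeDist φ x y < r} := by
  have hC := hφ.one_le x
  obtain ⟨R₁, hR₁, hrR₁⟩ := h.exists_le x r hr hrE
  obtain ⟨R, hR, hRr, hrR⟩ := exists_lt_le_two_mul h0 (r := r / C ^ 2) (by positivity) hR₁
    ((div_le_self hr.le (one_le_pow₀ hC)).trans hrR₁)
  have hsub : ball x R ⊆ {y | gaugeDist φ x y < r} := by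
    intro y hy
    rcases eq_or_ne x y with rfl | hxy
    · simpa [gaugeDist_self] using hr
    · calc gaugeDist φ x y ≤ C ^ 2 * φ x (dist x y) := hφ.gaugeDist_le hxy
        _ ≤ C ^ 2 * φ x R := by
          gcongr
          exact hφ.mono x _ R (dist_pos.2 hxy) (mem_ball'.1 hy).le le_top
        _ < r := by rwa [lt_div_iff₀' (by positivity)] at hRr
  have hle : r / (2 * C ^ 3) ≤ φ x R := by
    have hdouble : φ x (2 * R) ≤ C * (2 * R / R) * φ x R :=
      hφ.doubling x x R (2 * R) hR (by linarith) le_top (by simp [hR.le])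
    rw [mul_div_cancel_right₀ _ hR.ne'] at hdouble
    rw [div_le_iff₀ (by positivity)] at hrR ⊢
    nlinarith [mul_le_mul_of_nonneg_right hdouble (sq_nonneg C)]
  calc ENNReal.ofReal ((r / (2 * C ^ 3)) ^ s) ≤ ENNReal.ofReal (φ x R ^ s) := by gcongr
    _ ≤ μ (ball x R) := h.le_measure x R hR
    _ ≤ μ {y | gaugeDist φ x y < r} := measure_mono hsub

theorem ahlforsRegular [BorelSpace Z] [Nonempty Z] (h : IsRegularGauge φ μ s D E)
    (hφ : IsGauge φ C ⊤) (h0 : ∀ x, Tendsto (φ x) (𝓝[>] 0) (𝓝 0)) (hD : 0 ≤ D) (hs : 0 ≤ s)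
    {W : Type u} [MetricSpace W] [CompleteSpace W] (e : Z ≃ₜ W)
    (he : ∀ x y, dist (e x) (e y) = gaugeDist φ x y) : AhlforsRegular W s := by
  have hC := hφ.one_le (Classical.arbitrary Z)
  let _ : MeasurableSpace W := borel W
  have : BorelSpace W := ⟨rfl⟩
  refine ⟨inferInstance, inferInstance, inferInstance, μ.map e, max D ((2 * C ^ 3) ^ s),
    le_max_of_le_right (Real.one_le_rpow (by linarith [one_le_pow₀ (n := 3) hC]) hs),
    fun w r hr hrW ↦ ?_⟩
  obtain ⟨x, rfl⟩ := e.surjective w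
  have hmap : μ.map e (ball (e x) r) = μ {y | gaugeDist φ x y < r} := by
    rw [Measure.map_apply e.continuous.measurable isOpen_ball.measurableSet]
    congr 1
    ext y
    rw [mem_preimage, mem_ball', he]
    rfl
  have hWE : ediam (univ : Set W) ≤ E := ediam_le fun p _ q _ ↦ by
    obtain ⟨⟨p, rfl⟩, q, rfl⟩ := And.intro (e.surjective p) (e.surjective q)
    rw [edist_dist, he]
    exact hφ.ofReal_gaugeDist_le h.ofReal_le p q
  rw [hmap]
  constructor
  · refine le_trans ?_ (h.le_measure_gaugeDist_lt hφ (h0 x) hs hr (hrW.trans hWE))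
    rw [Real.div_rpow hr.le (by positivity), div_eq_inv_mul]
    gcongr
    exact le_max_right _ _
  · refine (h.measure_gaugeDist_lt_le hφ (h0 x) hD hs hr (hrW.trans hWE)).trans ?_
    gcongr
    exact le_max_left _ _

theorem mem_confdimSet [BorelSpace Z] [CompleteSpace Z] [Nontrivial Z]
    (h : IsRegularGauge φ μ s D E) (hφ : IsGauge φ C ⊤) (hc : 0 < c) (hα : 0 < α)
    (hrev : ReverseDoubling φ c α (ediam (univ : Set Z))) (hD : 0 ≤ D) (hs : 0 ≤ s) :
    s ∈ confdimSet Z := by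
  obtain ⟨W, _, e, he⟩ := hφ.exists_metricSpace
  have hqs : IsQuasisymmetric e := hφ.isQuasisymmetric hc hα hrev he
  have := hqs.completeSpace
  obtain ⟨x, y, hxy⟩ := exists_pair_ne Z
  have h0 := hrev.tendsto_zero hφ hα (dist_pos.2 hxy) (ofReal_dist_le_ediam_univ x y)
  let f : Z ≃ₜ W := ⟨e, hqs.continuous, hqs.symm.continuous⟩
  exact ⟨hs, W, _, f, h.ahlforsRegular hφ h0 hD hs f he, hqs⟩

end IsRegularGauge

end

/-! ### The gauge of a doubling measure -/

section

variable {Z : Type*} [MetricSpace Z] {φ : Z → ℝ → ℝ} {C K s : ℝ} {T : ℝ≥0∞} {x y u : Z} {r R : ℝ}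

section ReverseDoubling

variable {σ κ : ℝ}

theorem apply_pow_mul_le_of_le_mul {f : ℝ → ℝ} (hσ : 0 < σ) (hσ1 : σ ≤ 1) (hκ : 0 ≤ κ)
    (h : ∀ R, 0 < R → ENNReal.ofReal R ≤ T → f (σ * R) ≤ κ * f R) (hR : 0 < R)
    (hRT : ENNReal.ofReal R ≤ T) (n : ℕ) : f (σ ^ n * R) ≤ κ ^ n * f R := by
  induction n with
  | zero => simp
  | succ n ih =>
    have hle : σ ^ n * R ≤ R := mul_le_of_le_one_left hR.le (pow_le_one₀ hσ.le hσ1)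
    calc f (σ ^ (n + 1) * R) = f (σ * (σ ^ n * R)) := by ring_nf
      _ ≤ κ * f (σ ^ n * R) := h _ (by positivity) (ofReal_le_of_le hle hRT)
      _ ≤ κ * (κ ^ n * f R) := by gcongr
      _ = κ ^ (n + 1) * f R := by ring

theorem IsGauge.reverseDoubling_of_le_mul (hφ : IsGauge φ C T) (hσ : 0 < σ) (hσ1 : σ < 1)
    (hκ : 0 < κ) (hκ1 : κ < 1)
    (h : ∀ x R, 0 < R → ENNReal.ofReal R ≤ T → φ x (σ * R) ≤ κ * φ x R) :
    ReverseDoubling φ κ⁻¹ (Real.logb σ κ) T := by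
  intro x r R hr hrR hRT
  have hR := hr.trans_le hrR
  have hα : 0 < Real.logb σ κ := Real.logb_pos_of_base_lt_one hσ hσ1 hκ hκ1
  obtain ⟨n, hn, hnr⟩ := exists_nat_pow_near_of_lt_one (div_pos hr hR)
    ((div_le_one hR).2 hrR) hσ hσ1
  have hle : σ ^ n * R ≤ R := mul_le_of_le_one_left hR.le (pow_le_one₀ hσ.le hσ1.le)
  have hpow : κ ^ (n + 1) ≤ (r / R) ^ Real.logb σ κ := by
    calc κ ^ (n + 1) = (σ ^ (n + 1)) ^ Real.logb σ κ := by
          rw [← Real.rpow_natCast σ, ← Real.rpow_mul hσ.le, mul_comm, Real.rpow_mul hσ.le,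
            Real.rpow_logb hσ hσ1.ne hκ, Real.rpow_natCast]
      _ ≤ (r / R) ^ Real.logb σ κ := by gcongr
  have hpos := hφ.pos x R hR hRT
  calc φ x r ≤ φ x (σ ^ n * R) :=
        hφ.mono x r _ hr ((div_le_iff₀ hR).1 hnr) (ofReal_le_of_le hle hRT)
    _ ≤ κ ^ n * φ x R := apply_pow_mul_le_of_le_mul hσ hσ1.le hκ.le (h x) hR hRT n
    _ = κ⁻¹ * κ ^ (n + 1) * φ x R := by
      rw [pow_succ]
      field_simp
    _ ≤ κ⁻¹ * (r / R) ^ Real.logb σ κ * φ x R := by gcongr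

end ReverseDoubling

variable [MeasurableSpace Z] {μ : Measure Z}

/-- The size of a ball as seen by `μ`: the radius of a ball of the same measure in a space of
dimension `s`. -/
noncomputable def ballGauge (μ : Measure Z) (s : ℝ) (x : Z) (r : ℝ) : ℝ :=
  μ.real (ball x r) ^ s⁻¹

theorem ballGauge_rpow (hs : s ≠ 0) : ballGauge μ s x r ^ s = μ.real (ball x r) :=
  Real.rpow_inv_rpow measureReal_nonneg hs

theorem measure_ball_ne_top_of_real_pos (h : 0 < μ.real (ball x r)) : μ (ball x r) ≠ ⊤ :=
  fun htop ↦ h.ne' (by simp [Measure.real, htop])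

namespace DoublingBound

theorem real_le (h : DoublingBound μ C s T) (hC : 0 ≤ C)
    (hpos : ∀ x r, 0 < r → ENNReal.ofReal r ≤ T → 0 < μ.real (ball x r)) (hr : 0 < r)
    (hrR : r ≤ R) (hRT : ENNReal.ofReal R ≤ T) (hxy : dist x y ≤ R) :
    μ.real (ball x R) ≤ C * (R / r) ^ s * μ.real (ball y r) := by
  have hrR' : 0 ≤ R / r := div_nonneg (hr.le.trans hrR) hr.le
  have hfin := measure_ball_ne_top_of_real_pos (hpos y r hr (ofReal_le_of_le hrR hRT))
  have hle := ENNReal.toReal_mono (ENNReal.mul_ne_top ENNReal.ofReal_ne_top hfin)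
    (h x y r R hr hrR hRT hxy)
  rwa [ENNReal.toReal_mul, ENNReal.toReal_ofReal (by positivity)] at hle

theorem isGauge_ballGauge (h : DoublingBound μ C s T) (hC : 0 ≤ C) (hs : 0 < s)
    (hpos : ∀ x r, 0 < r → ENNReal.ofReal r ≤ T → 0 < μ.real (ball x r)) :
    IsGauge (ballGauge μ s) (C ^ s⁻¹) T where
  pos x r hr hrT := Real.rpow_pos_of_pos (hpos x r hr hrT) _
  mono x r R hr hrR hRT := by
    have hfin := measure_ball_ne_top_of_real_pos (hpos x R (hr.trans_le hrR) hRT)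
    exact Real.rpow_le_rpow measureReal_nonneg (measureReal_mono (ball_subset_ball hrR) hfin)
      (by positivity)
  doubling x y r R hr hrR hRT hxy := by
    have hrR' : 0 ≤ R / r := div_nonneg (hr.le.trans hrR) hr.le
    calc μ.real (ball x R) ^ s⁻¹ ≤ (C * (R / r) ^ s * μ.real (ball y r)) ^ s⁻¹ := by
          gcongr
          exact h.real_le hC hpos hr hrR hRT hxy
      _ = C ^ s⁻¹ * (R / r) * μ.real (ball y r) ^ s⁻¹ := by
          rw [Real.mul_rpow (by positivity) measureReal_nonneg, Real.mul_rpow hC (by positivity),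
            Real.rpow_rpow_inv hrR' hs.ne']

variable [OpensMeasurableSpace Z]

-- Uniform perfectness places a second ball, of comparable measure, in the complement of the
-- smaller one.
theorem real_ball_le (h : DoublingBound μ C s T) (hC : 0 < C)
    (hpos : ∀ x r, 0 < r → ENNReal.ofReal r ≤ T → 0 < μ.real (ball x r)) (hK : 1 ≤ K)
    (hZ : UniformlyPerfect Z K) (hT : T ≤ ediam (univ : Set Z)) (hR : 0 < R)
    (hRT : ENNReal.ofReal R ≤ T) :
    μ.real (ball x ((4 * K)⁻¹ * R)) ≤ (1 - (C * (4 * K) ^ s)⁻¹) * μ.real (ball x R) := by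
  obtain ⟨u, hu, huR⟩ := hZ x (R / 2) (by positivity) (ofReal_le_of_le (by linarith) (hRT.trans hT))
  have hr : 0 < (4 * K)⁻¹ * R := by positivity
  have hrR : (4 * K)⁻¹ * R ≤ R / 4 := by
    rw [inv_mul_le_iff₀ (by positivity)]
    nlinarith
  have hdist : R / 2 / K = (4 * K)⁻¹ * R + (4 * K)⁻¹ * R := by
    field_simp
    norm_num
  have hdisj : Disjoint (ball x ((4 * K)⁻¹ * R)) (ball u ((4 * K)⁻¹ * R)) :=
    ball_disjoint_ball (hdist ▸ hu)
  have hsub : ball x ((4 * K)⁻¹ * R) ∪ ball u ((4 * K)⁻¹ * R) ⊆ ball x R :=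
    union_subset (ball_subset_ball (by linarith))
      (ball_subset_ball' (by rw [dist_comm]; linarith))
  have hfin := measure_ball_ne_top_of_real_pos (hpos x R hR hRT)
  have hadd : μ.real (ball x ((4 * K)⁻¹ * R)) + μ.real (ball u ((4 * K)⁻¹ * R)) ≤
      μ.real (ball x R) := by
    rw [← measureReal_union hdisj isOpen_ball.measurableSet
      (measure_ne_top_of_subset (subset_union_left.trans hsub) hfin)
      (measure_ne_top_of_subset (subset_union_right.trans hsub) hfin)]
    exact measureReal_mono hsub hfin
  have hdoubling := h.real_le hC.le hpos (y := u) hr (hrR.trans (by linarith)) hRT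
    (by linarith : dist x u ≤ R)
  rw [show R / ((4 * K)⁻¹ * R) = 4 * K by field_simp, ← inv_mul_le_iff₀ (by positivity)]
    at hdoubling
  linarith

theorem exists_reverseDoubling (h : DoublingBound μ C s T) (hC : 0 < C) (hs : 0 < s)
    (hpos : ∀ x r, 0 < r → ENNReal.ofReal r ≤ T → 0 < μ.real (ball x r)) (hK : 1 ≤ K)
    (hZ : UniformlyPerfect Z K) (hT : T ≤ ediam (univ : Set Z)) :
    ∃ c α, 0 < c ∧ 0 < α ∧ ReverseDoubling (ballGauge μ s) c α T := by
  set δ := max (1 - (C * (4 * K) ^ s)⁻¹) (1 / 2)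
  have hδ : 0 < δ := lt_max_of_lt_right one_half_pos
  have hδ1 : δ < 1 := max_lt (sub_lt_self _ (by positivity)) one_half_lt_one
  have hσ : 0 < (4 * K)⁻¹ := by positivity
  have hσ1 : (4 * K)⁻¹ < 1 := inv_lt_one_of_one_lt₀ (by linarith)
  have hκ : 0 < δ ^ s⁻¹ := by positivity
  have hκ1 : δ ^ s⁻¹ < 1 := Real.rpow_lt_one hδ.le hδ1 (by positivity)
  refine ⟨_, _, inv_pos.2 hκ, Real.logb_pos_of_base_lt_one hσ hσ1 hκ hκ1,
    (h.isGauge_ballGauge hC.le hs hpos).reverseDoubling_of_le_mul hσ hσ1 hκ hκ1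
      fun x R hR hRT ↦ ?_⟩
  rw [ballGauge, ballGauge, ← Real.mul_rpow hδ.le measureReal_nonneg]
  gcongr
  exact (h.real_ball_le hC hpos hK hZ hT hR hRT).trans (by gcongr; exact le_max_left _ _)

end DoublingBound

end

section

variable {Z : Type u} {φ : Z → ℝ → ℝ} {C c α s : ℝ} {x : Z}

theorem ReverseDoubling.exists_le (hrev : ReverseDoubling φ c α ⊤) (hc : 0 < c) (hα : 0 < α)
    (hpos : 0 < φ x 1) (r : ℝ) : ∃ R, 0 < R ∧ r ≤ φ x R := by
  obtain ⟨R, hrR, hR⟩ := (((tendsto_rpow_atTop hα).eventually_ge_atTop (r * c / φ x 1)).and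
    (eventually_ge_atTop 1)).exists
  have hR0 : 0 < R := one_pos.trans_le hR
  refine ⟨R, hR0, ?_⟩
  have hle : φ x 1 ≤ c * (R ^ α)⁻¹ * φ x R := by
    simpa [Real.inv_rpow hR0.le] using hrev x 1 R one_pos hR le_top
  rw [div_le_iff₀ hpos] at hrR
  refine le_of_mul_le_mul_right ?_ hc
  calc r * c ≤ R ^ α * φ x 1 := hrR
    _ ≤ R ^ α * (c * (R ^ α)⁻¹ * φ x R) := by gcongr
    _ = φ x R * c := by field_simp

section Truncation

variable [MetricSpace Z] {T τ : ℝ}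

/-- The gauge `φ`, controlled at scales up to `T` only, with its radii truncated at `T` and its
values at `τ`. -/
def truncGauge (φ : Z → ℝ → ℝ) (T τ : ℝ) (x : Z) (R : ℝ) : ℝ :=
  min (φ x (min R T)) τ

theorem IsGauge.one_le_of_pos (hφ : IsGauge φ C (ENNReal.ofReal T)) (hT : 0 < T) (x : Z) :
    1 ≤ C :=
  le_of_mul_le_mul_right
    (by simpa [hT.ne'] using hφ.doubling x x T T hT le_rfl le_rfl (by simp [hT.le]))
    (hφ.pos x T hT le_rfl)

theorem IsGauge.truncGauge_le_mul (hφ : IsGauge φ C (ENNReal.ofReal T)) (hT : 0 < T)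
    (hτφ : ∀ x, τ ≤ φ x T) {x y : Z} {r R : ℝ} (hr : 0 < r) (hrR : r ≤ R) (hxy : dist x y ≤ R) :
    truncGauge φ T τ x R ≤ C * (R / r) * φ y (min r T) := by
  rcases le_total R T with hRT | hTR
  · rw [truncGauge, min_eq_left hRT, min_eq_left (hrR.trans hRT)]
    exact (min_le_left _ _).trans
      (hφ.doubling x y r R hr hrR (ENNReal.ofReal_le_ofReal hRT) hxy)
  · have hC := hφ.one_le_of_pos hT y
    have hr' : 0 < min r T := lt_min hr hT
    have hpos := hφ.pos y _ hr' (ENNReal.ofReal_le_ofReal (min_le_right r T))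
    have hscale : T / min r T ≤ R / r := by
      rcases le_total r T with h | h
      · rw [min_eq_left h]
        gcongr
      · rwa [min_eq_right h, div_self hT.ne', one_le_div hr]
    calc truncGauge φ T τ x R ≤ τ := min_le_right _ _
      _ ≤ φ y T := hτφ y
      _ ≤ C * (T / min r T) * φ y (min r T) :=
        hφ.doubling y y _ T hr' (min_le_right r T) le_rfl (by simp [hT.le])
      _ ≤ C * (R / r) * φ y (min r T) := by gcongr

theorem IsGauge.truncate (hφ : IsGauge φ C (ENNReal.ofReal T)) (hT : 0 < T) (hτ : 0 < τ)
    (hτφ : ∀ x, τ ≤ φ x T) : IsGauge (truncGauge φ T τ) C ⊤ where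
  pos x r hr _ :=
    lt_min (hφ.pos x _ (lt_min hr hT) (ENNReal.ofReal_le_ofReal (min_le_right r T))) hτ
  mono x r R hr hrR _ := min_le_min_right τ <| hφ.mono x _ _ (lt_min hr hT)
    (min_le_min_right T hrR) (ENNReal.ofReal_le_ofReal (min_le_right R T))
  doubling x y r R hr hrR _ hxy := by
    have hCrR : 1 ≤ C * (R / r) :=
      one_le_mul_of_one_le_of_one_le (hφ.one_le_of_pos hT x) ((one_le_div hr).2 hrR)
    change truncGauge φ T τ x R ≤ C * (R / r) * min (φ y (min r T)) τ
    rw [mul_min_of_nonneg _ _ (by positivity)]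
    exact le_min (hφ.truncGauge_le_mul hT hτφ hr hrR hxy)
      ((min_le_right _ _).trans (le_mul_of_one_le_left hτ.le hCrR))

theorem IsGauge.le_mul_truncGauge (hφ : IsGauge φ C (ENNReal.ofReal T)) (hT : 0 < T)
    (hτ : 0 < τ) (hτφ : ∀ x, τ ≤ φ x T) {b : ℝ} (hb : ∀ x, φ x T ≤ b) {R : ℝ} (hR : 0 < R)
    (x : Z) : φ x (min R T) ≤ b / τ * truncGauge φ T τ x R := by
  have hbτ : 1 ≤ b / τ := (one_le_div hτ).2 ((hτφ x).trans (hb x))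
  have hpos := hφ.pos x _ (lt_min hR hT) (ENNReal.ofReal_le_ofReal (min_le_right R T))
  rw [truncGauge, mul_min_of_nonneg _ _ (by positivity),
    div_mul_cancel₀ _ hτ.ne']
  exact le_min (le_mul_of_one_le_left hpos.le hbτ)
    ((hφ.mono x _ T (lt_min hR hT) (min_le_right R T) le_rfl).trans (hb x))

theorem ReverseDoubling.truncate (hrev : ReverseDoubling φ c α (ENNReal.ofReal T))
    (hφ : IsGauge φ C (ENNReal.ofReal T)) (hT : 0 < T) (hτ : 0 < τ) (hτφ : ∀ x, τ ≤ φ x T)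
    {b : ℝ} (hb : ∀ x, φ x T ≤ b) (hc : 0 ≤ c) (hα : 0 ≤ α) {d : ℝ} (hTd : T ≤ d) :
    ReverseDoubling (truncGauge φ T τ) (c * (d / T) ^ α * (b / τ)) α (ENNReal.ofReal d) := by
  intro x r R hr hrR hRd
  have hd : 0 < d := hT.trans_le hTd
  rw [ENNReal.ofReal_le_ofReal_iff hd.le] at hRd
  have hR : 0 < R := hr.trans_le hrR
  have hR' : 0 < min R T := lt_min hR hT
  have hr' : 0 < min r T := lt_min hr hT
  have hscale : min r T / min R T ≤ d / T * (r / R) := by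
    rw [div_mul_div_comm, div_le_div_iff₀ hR' (by positivity)]
    rcases le_total R T with h | h
    · rw [min_eq_left h, min_eq_left (hrR.trans h)]
      nlinarith [mul_pos hr hR]
    · rw [min_eq_right h]
      nlinarith [mul_le_mul (min_le_left r T) hRd hR.le hr.le]
  have : 0 < b := hτ.trans_le ((hτφ x).trans (hb x))
  have hφR := hφ.pos x _ hR' (ENNReal.ofReal_le_ofReal (min_le_right R T))
  calc truncGauge φ T τ x r ≤ φ x (min r T) := min_le_left _ _
    _ ≤ c * (min r T / min R T) ^ α * φ x (min R T) := hrev x _ _ hr'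
      (min_le_min_right T hrR) (ENNReal.ofReal_le_ofReal (min_le_right R T))
    _ ≤ c * (d / T * (r / R)) ^ α * (b / τ * truncGauge φ T τ x R) := by
      gcongr
      exact hφ.le_mul_truncGauge hT hτ hτφ hb hR x
    _ = c * (d / T) ^ α * (b / τ) * (r / R) ^ α * truncGauge φ T τ x R := by
      rw [Real.mul_rpow (by positivity) (by positivity)]
      ring

end Truncation

end

section

variable {Z : Type u} [MetricSpace Z] [MeasurableSpace Z] {μ : Measure Z} {C K s : ℝ} {T : ℝ≥0∞}
  {x : Z} {r R : ℝ}

theorem ofReal_ballGauge_rpow (hs : s ≠ 0) (hfin : μ (ball x r) ≠ ⊤) :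
    ENNReal.ofReal (ballGauge μ s x r ^ s) = μ (ball x r) := by
  rw [ballGauge_rpow hs, ofReal_measureReal hfin]

namespace DoublingBound

theorem measure_ball_two_mul_le (h : DoublingBound μ C s T) (hs : s ≠ 0) (hR : 0 < R)
    (hRT : ENNReal.ofReal (2 * R) ≤ T) (hfin : μ (ball x R) ≠ ⊤) (hC : 0 ≤ C) :
    μ (ball x (2 * R)) ≤ ENNReal.ofReal (C * 2 ^ s * ballGauge μ s x R ^ s) := by
  rw [ENNReal.ofReal_mul (by positivity), ofReal_ballGauge_rpow hs hfin]
  simpa [hR.ne'] using h x x R (2 * R) hR (by linarith) hRT (by simp [hR.le])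

theorem isRegularGauge_ballGauge (h : DoublingBound μ C s ⊤) (hC : 0 ≤ C) (hs : s ≠ 0)
    (hpos : ∀ x r, 0 < r → 0 < μ.real (ball x r))
    (hunbdd : ∀ x r, ∃ R, 0 < R ∧ r ≤ ballGauge μ s x R) :
    IsRegularGauge (ballGauge μ s) μ s (C * 2 ^ s) ⊤ where
  ofReal_le _ _ _ := le_top
  exists_le x r _ _ := hunbdd x r
  le_measure x R hR :=
    (ofReal_ballGauge_rpow hs (measure_ball_ne_top_of_real_pos (hpos x R hR))).le
  measure_le x R hR _ :=
    h.measure_ball_two_mul_le hs hR le_top (measure_ball_ne_top_of_real_pos (hpos x R hR)) hC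

theorem isRegularGauge_truncGauge {T τ : ℝ} (h : DoublingBound μ C s (ENNReal.ofReal T))
    (hC : 0 ≤ C) (hs : 0 < s) (hT : 0 < T) (hτ : 0 < τ)
    (hpos : ∀ x r, 0 < r → ENNReal.ofReal r ≤ ENNReal.ofReal T → 0 < μ.real (ball x r))
    (hτφ : ∀ x, τ ≤ ballGauge μ s x (T / 2)) :
    IsRegularGauge (truncGauge (ballGauge μ s) T τ) μ s (C * 2 ^ s) (ENNReal.ofReal τ) where
  ofReal_le x R _ := ENNReal.ofReal_le_ofReal (min_le_right _ _)
  exists_le x r _ hrτ := by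
    rw [ENNReal.ofReal_le_ofReal_iff hτ.le] at hrτ
    refine ⟨T / 2, half_pos hT, le_min (hrτ.trans ?_) hrτ⟩
    rw [min_eq_left (half_le_self hT.le)]
    exact hτφ x
  le_measure x R hR := by
    have hφ := h.isGauge_ballGauge hC hs hpos
    have hR' : 0 < min R T := lt_min hR hT
    have hRT := ENNReal.ofReal_le_ofReal (min_le_right R T)
    have hposφ := hφ.pos x _ hR' hRT
    calc ENNReal.ofReal (truncGauge (ballGauge μ s) T τ x R ^ s)
        ≤ ENNReal.ofReal (ballGauge μ s x (min R T) ^ s) := by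
          gcongr
          · exact le_min hposφ.le hτ.le
          · exact min_le_left _ _
      _ = μ (ball x (min R T)) :=
        ofReal_ballGauge_rpow hs.ne' (measure_ball_ne_top_of_real_pos (hpos x _ hR' hRT))
      _ ≤ μ (ball x R) := measure_mono (ball_subset_ball (min_le_left R T))
  measure_le x R hR hRτ := by
    have hφ := h.isGauge_ballGauge hC hs hpos
    have hlt : ballGauge μ s x (min R T) < τ :=
      (min_lt_iff.1 ((ENNReal.ofReal_lt_ofReal_iff hτ).1 hRτ)).resolve_right (lt_irrefl τ)
    have hRT : R < T / 2 := by
      by_contra! hTR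
      exact ((hτφ x).trans (hφ.mono x _ _ (half_pos hT) (le_min hTR (half_le_self hT.le))
        (ENNReal.ofReal_le_ofReal (min_le_right R T)))).not_gt hlt
    rw [truncGauge, min_eq_left (hlt.le), min_eq_left (by linarith)]
    exact h.measure_ball_two_mul_le hs.ne' hR (ENNReal.ofReal_le_ofReal (by linarith))
      (measure_ball_ne_top_of_real_pos (hpos x R hR (ENNReal.ofReal_le_ofReal (by linarith)))) hC

variable [BorelSpace Z] [CompleteSpace Z] [Nontrivial Z]

theorem mem_confdimSet_of_unbounded (h : DoublingBound μ C s ⊤) (hC : 0 < C) (hs : 0 < s)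
    (hpos : ∀ x r, 0 < r → 0 < μ.real (ball x r)) (hK : 1 ≤ K) (hZ : UniformlyPerfect Z K)
    (hunbdd : ediam (univ : Set Z) = ⊤) : s ∈ confdimSet Z := by
  have hφ := h.isGauge_ballGauge hC.le hs fun x r hr _ ↦ hpos x r hr
  obtain ⟨c, α, hc, hα, hrev⟩ :=
    h.exists_reverseDoubling hC hs (fun x r hr _ ↦ hpos x r hr) hK hZ hunbdd.ge
  have hreg := h.isRegularGauge_ballGauge hC.le hs.ne' hpos
    fun x r ↦ hrev.exists_le hc hα (hφ.pos x 1 one_pos le_top) r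
  exact hreg.mem_confdimSet hφ hc hα (hunbdd ▸ hrev) (by positivity) hs.le

theorem mem_confdimSet_of_ballGauge_bounds {T τ b : ℝ}
    (h : DoublingBound μ C s (ENNReal.ofReal T)) (hC : 0 < C) (hs : 0 < s) (hT : 0 < T)
    (hpos : ∀ x r, 0 < r → ENNReal.ofReal r ≤ ENNReal.ofReal T → 0 < μ.real (ball x r))
    (hτ : 0 < τ) (hτφ : ∀ x, τ ≤ ballGauge μ s x (T / 2)) (hb : ∀ x, ballGauge μ s x T ≤ b)
    (hK : 1 ≤ K) (hZ : UniformlyPerfect Z K) (hTZ : ENNReal.ofReal T ≤ ediam (univ : Set Z))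
    (hbdd : ediam (univ : Set Z) ≠ ⊤) : s ∈ confdimSet Z := by
  have hφ := h.isGauge_ballGauge hC.le hs hpos
  have hτφ' (x : Z) : τ ≤ ballGauge μ s x T :=
    (hτφ x).trans (hφ.mono x _ _ (half_pos hT) (half_le_self hT.le) le_rfl)
  obtain ⟨x⟩ : Nonempty Z := inferInstance
  have hb0 : 0 < b := hτ.trans_le ((hτφ' x).trans (hb x))
  have hTd : T ≤ (ediam (univ : Set Z)).toReal := (ENNReal.ofReal_le_iff_le_toReal hbdd).1 hTZ
  have hd : 0 < (ediam (univ : Set Z)).toReal := hT.trans_le hTd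
  obtain ⟨c, α, hc, hα, hrev⟩ := h.exists_reverseDoubling hC hs hpos hK hZ hTZ
  have hrev' := hrev.truncate hφ hT hτ hτφ' hb hc.le hα.le hTd
  rw [ENNReal.ofReal_toReal hbdd] at hrev'
  exact (h.isRegularGauge_truncGauge hC.le hs hT hτ hpos hτφ).mem_confdimSet
    (hφ.truncate hT hτ hτφ') (by positivity) hα hrev' (by positivity) hs.le

theorem mem_confdimSet_of_bounded {T a b : ℝ} (h : DoublingBound μ C s (ENNReal.ofReal T))
    (hC : 0 < C) (hs : 0 < s) (hT : 0 < T) (ha : 0 < a)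
    (hab : ∀ x, ENNReal.ofReal a ≤ μ (ball x T) ∧ μ (ball x T) ≤ ENNReal.ofReal b)
    (hK : 1 ≤ K) (hZ : UniformlyPerfect Z K) (hTZ : ENNReal.ofReal T ≤ ediam (univ : Set Z))
    (hbdd : ediam (univ : Set Z) ≠ ⊤) : s ∈ confdimSet Z := by
  have hfin (x : Z) : μ (ball x T) ≠ ⊤ := ((hab x).2.trans_lt ENNReal.ofReal_lt_top).ne
  have hpos (x : Z) (r : ℝ) (hr : 0 < r) (hrT : ENNReal.ofReal r ≤ ENNReal.ofReal T) :
      0 < μ.real (ball x r) := by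
    have hrT' : r ≤ T := (ENNReal.ofReal_le_ofReal_iff hT.le).1 hrT
    refine ENNReal.toReal_pos (h.measure_ball_pos hr hrT' le_rfl (by simp [hT.le])
      ((ENNReal.ofReal_pos.2 ha).trans_le (hab x).1)).ne' ?_
    exact measure_ne_top_of_subset (ball_subset_ball hrT') (hfin x)
  have hφ := h.isGauge_ballGauge hC.le hs hpos
  have hτφ (x : Z) : a ^ s⁻¹ / (2 * C ^ s⁻¹) ≤ ballGauge μ s x (T / 2) := by
    rw [div_le_iff₀' (by positivity)]
    calc a ^ s⁻¹ ≤ ballGauge μ s x T := by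
          unfold ballGauge
          gcongr
          exact (ENNReal.ofReal_le_iff_le_toReal (hfin x)).1 (hab x).1
      _ ≤ C ^ s⁻¹ * (T / (T / 2)) * ballGauge μ s x (T / 2) :=
        hφ.doubling x x (T / 2) T (half_pos hT) (half_le_self hT.le) le_rfl (by simp [hT.le])
      _ = 2 * C ^ s⁻¹ * ballGauge μ s x (T / 2) := by field_simp
  have hb (x : Z) : ballGauge μ s x T ≤ (max b 0) ^ s⁻¹ := by
    unfold ballGauge
    gcongr
    exact (ENNReal.toReal_mono ENNReal.ofReal_ne_top (hab x).2).trans_eq ENNReal.toReal_ofReal'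
  exact h.mem_confdimSet_of_ballGauge_bounds hC hs hT hpos (by positivity) hτφ hb hK hZ hTZ hbdd

end DoublingBound

end

/-! ### Conformal dimension -/

section

variable {Z : Type u} [MetricSpace Z] [CompleteSpace Z] [Nontrivial Z] {ρ K s : ℝ} {N : ℕ}

theorem CountingBound.mem_confdimSet (hZ : CountingBound Z ρ N (ediam (univ : Set Z) / 2))
    (hρ : 0 < ρ) (hρ1 : ρ ≤ 1 / 20) (hN : 1 ≤ N) (hs : 0 < s) (hρs : ρ⁻¹ ^ s = N) (hK : 1 ≤ K)
    (hperf : UniformlyPerfect Z K) : s ∈ confdimSet Z := by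
  let _ : MeasurableSpace Z := borel Z
  have : BorelSpace Z := ⟨rfl⟩
  rcases eq_or_ne (ediam (univ : Set Z)) ⊤ with hunbdd | hbdd
  · rw [hunbdd, ENNReal.top_div_of_ne_top ENNReal.ofNat_ne_top] at hZ
    obtain ⟨μ, C, hC, hμ, hpos⟩ := hZ.exists_doublingBound_top hρ hρ1 hN hs.le hρs
    exact hμ.mem_confdimSet_of_unbounded hC hs
      (fun x r hr ↦ ENNReal.toReal_pos (hpos x r hr).1.ne' (hpos x r hr).2.ne) hK hperf hunbdd
  · set d := (ediam (univ : Set Z)).toReal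
    have hd : ENNReal.ofReal d = ediam (univ : Set Z) := ENNReal.ofReal_toReal hbdd
    have hdpos : 0 < d := by
      obtain ⟨x, y, hxy⟩ := exists_pair_ne Z
      exact (dist_pos.2 hxy).trans_le
        ((ENNReal.ofReal_le_iff_le_toReal hbdd).1 (ofReal_dist_le_ediam_univ x y))
    have hL : 0 < ρ * (d / 2) := by positivity
    obtain ⟨μ, C, a, b, hC, ha, hμ, hab⟩ :=
      hZ.exists_doublingBound_of_le hρ hρ1 hN hs.le hρs hL (by
        rw [mul_div_cancel_left₀ _ hρ.ne', ENNReal.ofReal_div_of_pos two_pos, hd,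
          ENNReal.ofReal_ofNat])
    exact hμ.mem_confdimSet_of_bounded hC hs (half_pos hL) ha hab hK hperf
      (ofReal_le_of_le (by nlinarith) hd.le) hbdd

end

theorem exists_inv_rpow_eq_natCast {ρ Q : ℝ} {N : ℕ} (hρ : 0 < ρ) (hρ1 : ρ < 1) (hN : 2 ≤ N)
    (hNQ : N * ρ ^ Q < 1) : ∃ s, 0 < s ∧ s < Q ∧ ρ⁻¹ ^ s = N := by
  have hN1 : (1 : ℝ) < N := by exact_mod_cast hN
  have hρ1' : 1 < ρ⁻¹ := (one_lt_inv₀ hρ).2 hρ1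
  refine ⟨Real.logb ρ⁻¹ N, Real.logb_pos hρ1' hN1, ?_,
    Real.rpow_logb (by positivity) hρ1'.ne' (by positivity)⟩
  rw [Real.logb_lt_iff_lt_rpow hρ1' (by positivity), Real.inv_rpow hρ.le]
  rwa [← one_div, lt_div_iff₀ (by positivity)]

section

variable {W : Type u} [MetricSpace W] [MeasurableSpace W] [BorelSpace W] {μ : Measure W}
  {C Q : ℝ} {Y : Set W}

theorem AhlforsBounds.exists_countingBound_of_porous (hμ : AhlforsBounds μ C Q) (hC : 0 < C)
    (hQ : 0 < Q) (hY : Porous Y) :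
    ∃ (ρ : ℝ) (N : ℕ), 0 < ρ ∧ ρ ≤ 1 / 20 ∧ 2 ≤ N ∧ N * ρ ^ Q < 1 ∧
      CountingBound Y ρ N (ediam (univ : Set Y) / 2) := by
  obtain ⟨ρ, N, hρ, hρ1, hN, hNQ, hcard⟩ := hμ.exists_card_le_of_porous hC hQ hY
  refine ⟨ρ, N, hρ, hρ1, hN, hNQ, fun x R hR hRY A hA hsep ↦ ?_⟩
  have hRW : ENNReal.ofReal (2 * R) ≤ ediam (univ : Set W) := by
    rw [ENNReal.le_div_iff_mul_le (by simp) (by simp)] at hRY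
    rw [mul_comm, ENNReal.ofReal_mul hR.le, ENNReal.ofReal_ofNat]
    refine hRY.trans (ediam_le fun p _ q _ ↦ ?_)
    exact edist_le_ediam_of_mem (mem_univ (p : W)) (mem_univ (q : W))
  rw [← Subtype.val_injective.encard_image A]
  refine encard_le_of_finset_card_le fun B hB ↦ hcard x R hR hRW B (hB.trans ?_) ?_
  · rintro _ ⟨a, ha, rfl⟩
    exact ⟨hA ha, a.2⟩
  · exact ((Subtype.val_injective.injOn.pairwise_image).2 hsep).mono hB

theorem AhlforsBounds.exists_mem_confdimSet_lt_of_porous (hμ : AhlforsBounds μ C Q) (hC : 0 < C)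
    (hQ : 0 < Q) (hY : Porous Y) [CompleteSpace Y] [Nontrivial Y] {K : ℝ} (hK : 1 ≤ K)
    (hperf : UniformlyPerfect Y K) : ∃ s < Q, s ∈ confdimSet Y := by
  obtain ⟨ρ, N, hρ, hρ1, hN, hNQ, hcount⟩ := hμ.exists_countingBound_of_porous hC hQ hY
  obtain ⟨s, hs, hsQ, hρs⟩ := exists_inv_rpow_eq_natCast hρ (by linarith) hN hNQ
  exact ⟨s, hsQ, hcount.mem_confdimSet hρ hρ1 (by omega) hs hρs hK hperf⟩

end

theorem confdim_le_of_mem {X : Type u} [MetricSpace X] {Q : ℝ} (hQ : Q ∈ confdimSet X) :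
    confdim X ≤ Q :=
  csInf_le ⟨0, fun _ h ↦ h.1⟩ hQ

theorem confdimSet_subset_of_isQuasisymmetric {X Y : Type u} [MetricSpace X] [MetricSpace Y]
    {f : X ≃ₜ Y} (hf : IsQuasisymmetric f) : confdimSet Y ⊆ confdimSet X :=
  fun _ ⟨hQ, W, _, g, hW, hg⟩ ↦ ⟨hQ, W, _, f.trans g, hW, hg.comp hf⟩

theorem confdim_nonpos_of_subsingleton {X : Type u} [MetricSpace X] [Subsingleton X] :
    confdim X ≤ 0 := by
  let _ : MeasurableSpace X := borel X
  have : BorelSpace X := ⟨rfl⟩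
  refine confdim_le_of_mem ⟨le_rfl, X, _, .refl X,
    ⟨inferInstance, _, this, 0, 1, le_rfl, fun w r hr hrX ↦ absurd hrX ?_⟩,
    .refl _, fun _ _ _ _ h ↦ h⟩
  change ¬ ENNReal.ofReal r ≤ ediam (univ : Set X)
  rw [ediam_subsingleton subsingleton_univ, nonpos_iff_eq_zero, ENNReal.ofReal_eq_zero, not_le]
  exact hr

end ConformalDimension

end

open ConformalDimension in
/-- If `X` is a nonempty metric space whose conformal dimension `Q = confdim X` is positive
(finiteness being witnessed by attainment) and attained — i.e. there are an Ahlfors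
`Q`-regular space `W` and a quasisymmetric homeomorphism from `X` onto `W` — then no
nonempty porous subset `Y ⊆ X` (with the induced metric) admits a quasisymmetric
homeomorphism onto `X`. -/
theorem no_porous_subset_qs_to_self_of_attained {X : Type u} [MetricSpace X] [Nonempty X]
    (hpos : 0 < confdim X)
    (hatt : ∃ (W : Type u) (_ : MetricSpace W) (f : X ≃ₜ W),
        AhlforsRegular W (confdim X) ∧ IsQuasisymmetric (f : X → W)) :
    ∀ Y : Set X, Y.Nonempty → Porous Y →
      ¬ ∃ g : ↥Y ≃ₜ X, IsQuasisymmetric (g : ↥Y → X) := by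
  rintro Y - hY ⟨g, hg⟩
  have : Nontrivial X :=
    not_subsingleton_iff_nontrivial.1 fun _ ↦ confdim_nonpos_of_subsingleton.not_gt hpos
  obtain ⟨W, _, f, ⟨_, _, _, μ, C, hC, hμ : AhlforsBounds μ C (confdim X)⟩, hf⟩ := hatt
  obtain ⟨K, hK, hW⟩ := hμ.exists_uniformlyPerfect hC hpos
  let k : X ≃ₜ f '' Y := g.symm.trans (f.image Y)
  have hfY : IsQuasisymmetric (f.image Y) := hf.imp fun _ hη x y z t ↦ hη x y z t
  have hk : IsQuasisymmetric k := hfY.comp (hg.symm (f := g.toEquiv))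
  let e : W ≃ₜ f '' Y := f.symm.trans k
  have he : IsQuasisymmetric e := hk.comp (hf.symm (f := f.toEquiv))
  have := he.completeSpace (f := e.toEquiv)
  have := k.symm.toEquiv.nontrivial
  obtain ⟨K', hK', hY'⟩ := hW.of_isQuasisymmetric he hK
  obtain ⟨s, hs, hsY⟩ := hμ.exists_mem_confdimSet_lt_of_porous (by linarith) hpos
    (hY.image_of_isQuasisymmetric hf hK hW) hK' hY'
  exact (confdim_le_of_mem (confdimSet_subset_of_isQuasisymmetric hk hsY)).not_gt hs
end

section
/- Let p > 1 and C > 0 be real numbers, and let (a_n)_{n≥0} be a sequence of nonnegative real numbers satisfying a_n ≤ (C / n^{p-1}) · max{a_0, a_1, …, a_{n-1}} for every n ≥ 1. Then the sequence (a_n) is bounded and a_n → 0 as n → ∞. -/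
/-!
As soon as the coefficients of the recursion are at most `1`, no later term exceeds the running
maximum, so the running maximum is eventually constant and the sequence is bounded. Each term is
then at most a coefficient tending to `0` times a convergent running maximum.
-/

open Filter Topology

theorem bddAbove_range_of_eventually_succ_le_partialSups {α : Type*} [SemilatticeSup α]
    {a : ℕ → α} (h : ∀ᶠ n in atTop, a (n + 1) ≤ partialSups a n) : BddAbove (Set.range a) := by
  obtain ⟨N, hN⟩ := eventually_atTop.mp h
  have partialSups_le : ∀ n ≥ N, partialSups a n ≤ partialSups a N := fun n hn ↦ by
    induction n, hn using Nat.le_induction with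
    | base => exact le_rfl
    | succ n hn ih =>
      rw [partialSups_add_one]
      exact sup_le ih ((hN n hn).trans ih)
  refine ⟨partialSups a N, Set.forall_mem_range.mpr fun n ↦ ?_⟩
  rcases le_total n N with hn | hn
  · exact le_partialSups_of_le a hn
  · exact (le_partialSups a n).trans (partialSups_le n hn)

theorem tendsto_zero_of_eventually_succ_le_mul_partialSups {a c : ℕ → ℝ}
    (ha : ∀ᶠ n in atTop, 0 ≤ a n) (hbdd : BddAbove (Set.range a)) (hc : Tendsto c atTop (𝓝 0))
    (hrec : ∀ᶠ n in atTop, a (n + 1) ≤ c n * partialSups a n) : Tendsto a atTop (𝓝 0) := by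
  have hsup : Tendsto (partialSups a) atTop (𝓝 (⨆ n, partialSups a n)) :=
    tendsto_atTop_ciSup (partialSups a).monotone (bddAbove_range_partialSups.mpr hbdd)
  have hmul : Tendsto (fun n ↦ c n * partialSups a n) atTop (𝓝 0) := by
    simpa only [zero_mul] using hc.mul hsup
  exact (tendsto_add_atTop_iff_nat 1).mp
    (squeeze_zero' ((tendsto_add_atTop_nat 1).eventually ha) hrec hmul)

theorem bounded_and_tendsto_zero_of_rec_general {a c : ℕ → ℝ}
    (ha : ∀ᶠ n in atTop, 0 ≤ a n) (hc : Tendsto c atTop (𝓝 0))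
    (hrec : ∀ᶠ n in atTop, a (n + 1) ≤ c n * partialSups a n) :
    BddAbove (Set.range a) ∧ Tendsto a atTop (𝓝 0) := by
  have hbdd : BddAbove (Set.range a) := by
    refine bddAbove_range_of_eventually_succ_le_partialSups ?_
    filter_upwards [ha, hc.eventually_le_const one_pos, hrec] with n han hcn hn
    exact hn.trans (mul_le_of_le_one_left (han.trans (le_partialSups a n)) hcn)
  exact ⟨hbdd, tendsto_zero_of_eventually_succ_le_mul_partialSups ha hbdd hc hrec⟩

theorem tendsto_const_div_natCast_rpow_atTop_nhds_zero (C : ℝ) {q : ℝ} (hq : 0 < q) :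
    Tendsto (fun n : ℕ ↦ C / (n : ℝ) ^ q) atTop (𝓝 0) :=
  ((tendsto_rpow_atTop hq).comp tendsto_natCast_atTop_atTop).const_div_atTop C

/-- Let `p > 1`, `C > 0`, and let `(a_n)` be a sequence of nonnegative reals with
`a_n ≤ (C / n^(p-1)) · max{a_0, …, a_{n-1}}` for every `n ≥ 1`. Then `(a_n)` is bounded
and tends to `0`. -/
theorem bounded_and_tendsto_zero_of_rec (p C : ℝ) (hp : 1 < p) (hC : 0 < C)
    (a : ℕ → ℝ) (ha : ∀ n : ℕ, 0 ≤ a n)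
    (hrec : ∀ n : ℕ, ∀ hn : 1 ≤ n,
      a n ≤ (C / (n : ℝ) ^ (p - 1)) *
        (Finset.range n).sup' (Finset.nonempty_range_iff.mpr (Nat.one_le_iff_ne_zero.mp hn))
          a) :
    BddAbove (Set.range a) ∧ Filter.Tendsto a Filter.atTop (nhds 0) :=
  bounded_and_tendsto_zero_of_rec_general (.of_forall ha)
    ((tendsto_const_div_natCast_rpow_atTop_nhds_zero C (sub_pos.mpr hp)).comp
      (tendsto_add_atTop_nat 1))
    (.of_forall fun n ↦ by
      simpa only [Function.comp_apply, partialSups_eq_sup'_range] using hrec (n + 1) n.succ_pos)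
end
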